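/- Take k = 6, n = 8 and the weight vectors w¹,…,w⁶ the six vectors in ℤ⁶ with five coordinates 1 and one coordinate 0, together with w⁷ = w⁸ = w⁹ = (1,1,1,1,1,1), in the Vandermonde-quotient construction. Then for every δ ≥ 0 the power series F_δ ∈ ℚ[[x₁,…,x₆]] is divisible by Δ = ∏_{1≤i<j≤6}(x_i−x_j), and the resulting series I₀(q) = Σ_{δ≥0} a_δ q^δ with a_δ = (−1)^δ (F_δ/Δ)(0) satisfies {361θ⁴ − 19q(700θ⁴+1238θ³+999θ²+380θ+57) + q²(−64745θ⁴−368006θ³−609133θ²−412756θ−102258) + 27q³(6397θ⁴+12198θ³−11923θ²−27360θ−11286) + 729q⁴(64θ⁴+1154θ³+2425θ²+1848θ+486) − 177147q⁵(θ+1)⁴} I₀ = 0. -/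

import Mathlib

noncomputable section
namespace Stmt9

/-- The multivariable power series ring `ℚ[[x₁,…,x_6]]`. -/
abbrev R := MvPowerSeries (Fin 6) ℚ

/-- The constant `a` in `R`. -/
def Cc (a : ℚ) : R := MvPowerSeries.C a

/-- The pairs `i < j`. -/
def pairs : Finset (Fin 6 × Fin 6) := Finset.univ.filter fun p => p.1 < p.2

/-- The Vandermonde element `Δ = ∏_{i<j}(x_i − x_j)`. -/
def Vand : R := ∏ p ∈ pairs, (MvPowerSeries.X p.1 - MvPowerSeries.X p.2)

/-- The weight vectors. -/
def ws : List (Fin 6 → ℕ) := [![0, 1, 1, 1, 1, 1], ![1, 0, 1, 1, 1, 1], ![1, 1, 0, 1, 1, 1], ![1, 1, 1, 0, 1, 1], ![1, 1, 1, 1, 0, 1], ![1, 1, 1, 1, 1, 0], ![1, 1, 1, 1, 1, 1], ![1, 1, 1, 1, 1, 1], ![1, 1, 1, 1, 1, 1]]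

/-- `n = 8`. -/
def n : ℕ := 8

/-- The term `T_d` of the Vandermonde-quotient construction:
`T_d = ∏_{i<j}(x_i−x_j+d_i−d_j) · ∏_s ∏_{m=1}^{⟨wˢ,d⟩}(⟨wˢ,x⟩+m) · u_d⁻¹`. -/
def T (d : Fin 6 → ℕ) : R :=
  (∏ p ∈ pairs,
      (MvPowerSeries.X p.1 - MvPowerSeries.X p.2 + Cc ((d p.1 : ℚ) - (d p.2 : ℚ)))) *
    (ws.map fun w =>
      ∏ m ∈ Finset.Icc 1 (∑ j, w j * d j),
        ((∑ j, Cc ((w j : ℚ)) * MvPowerSeries.X j) + Cc (m : ℚ))).prod *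
    (∏ j, ∏ m ∈ Finset.Icc 1 (d j), (MvPowerSeries.X j + Cc (m : ℚ)) ^ n)⁻¹

/-- `F_δ = Σ_{d₁+⋯+d_k=δ} T_d`. -/
def F (δ : ℕ) : R :=
  ∑ d ∈ (Fintype.piFinset fun _ : Fin 6 => Finset.range (δ + 1)).filter
      (fun d => ∑ j, d j = δ), T d

/-- The Euler operator `θ = q·d/dq` on `ℚ[[q]]`. -/
def th (f : PowerSeries ℚ) : PowerSeries ℚ :=
  PowerSeries.mk fun d => (d : ℚ) * PowerSeries.coeff d f

/-! ### Verified arithmetic of polynomials in three variables with integer coefficients -/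

/-- Coefficientwise sum of coefficient lists. -/
def listAdd {α : Type} (add : α → α → α) : List α → List α → List α
  | [], q => q
  | a :: p, [] => a :: p
  | a :: p, b :: q => add a b :: listAdd add p q

/-- Product of coefficient lists. -/
def listMul {α : Type} (add mul : α → α → α) (zero : α) : List α → List α → List α
  | [], _ => []
  | a :: p, q => listAdd add (q.map (mul a)) (zero :: listMul add mul zero p q)

/-- Evaluation of a coefficient list at `x`, the coefficients being evaluated by `v`. -/
def listEval {α K : Type} [CommRing K] (v : α → K) (x : K) : List α → K
  | [] => 0
  | a :: p => v a + x * listEval v x p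

section ListEval

variable {α K : Type} [CommRing K] {v : α → K} {add mul : α → α → α} {zero : α}

theorem listEval_add (hadd : ∀ a b, v (add a b) = v a + v b) (x : K) (p q : List α) :
    listEval v x (listAdd add p q) = listEval v x p + listEval v x q := by
  induction p generalizing q with
  | nil => simp [listAdd, listEval]
  | cons a p ih =>
    cases q with
    | nil => simp [listAdd, listEval]
    | cons b q => simp only [listAdd, listEval, hadd, ih]; ring

theorem listEval_map_mul (hmul : ∀ a b, v (mul a b) = v a * v b) (x : K) (a : α) (q : List α) :
    listEval v x (q.map (mul a)) = v a * listEval v x q := by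
  induction q with
  | nil => simp [listEval]
  | cons b q ih => simp only [List.map_cons, listEval, hmul, ih]; ring

theorem listEval_mul (hadd : ∀ a b, v (add a b) = v a + v b)
    (hmul : ∀ a b, v (mul a b) = v a * v b) (hzero : v zero = 0) (x : K) (p q : List α) :
    listEval v x (listMul add mul zero p q) = listEval v x p * listEval v x q := by
  induction p with
  | nil => simp [listMul, listEval]
  | cons a p ih =>
    simp only [listMul, listEval, listEval_add hadd, listEval_map_mul hmul, ih, hzero]; ring

theorem listEval_eq_zero (x : K) (p : List α) (hp : ∀ a ∈ p, v a = 0) : listEval v x p = 0 := by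
  induction p with
  | nil => rfl
  | cons a p ih =>
    simp only [List.forall_mem_cons] at hp
    simp [listEval, hp.1, ih hp.2]

end ListEval

theorem map_listAdd {α β : Type} {add : α → α → α} {add' : β → β → β} {f : α → β}
    (h : ∀ a b, f (add a b) = add' (f a) (f b)) (p q : List α) :
    (listAdd add p q).map f = listAdd add' (p.map f) (q.map f) := by
  induction p generalizing q with
  | nil => rfl
  | cons a p ih =>
    cases q with
    | nil => rfl
    | cons b q => simp only [listAdd, List.map_cons, h, ih]

theorem map_listMul {α β : Type} {add mul : α → α → α} {zero : α} {add' mul' : β → β → β}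
    {zero' : β} {f : α → β} (hadd : ∀ a b, f (add a b) = add' (f a) (f b))
    (hmul : ∀ a b, f (mul a b) = mul' (f a) (f b)) (hzero : f zero = zero') (p q : List α) :
    (listMul add mul zero p q).map f = listMul add' mul' zero' (p.map f) (q.map f) := by
  induction p with
  | nil => rfl
  | cons a p ih =>
    simp only [listMul, List.map_cons, map_listAdd hadd, ih, hzero, List.map_map]
    congr 1
    exact List.map_congr_left fun b _ => hmul a b

/-- The sum of the sizes of the coefficients. -/
def listNorm {α : Type} (ν : α → ℕ) (p : List α) : ℕ := (p.map ν).sum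

section ListNorm

variable {α : Type} {ν : α → ℕ} {add mul : α → α → α} {zero : α}

theorem listNorm_add (hadd : ∀ a b, ν (add a b) ≤ ν a + ν b) (p q : List α) :
    listNorm ν (listAdd add p q) ≤ listNorm ν p + listNorm ν q := by
  induction p generalizing q with
  | nil => simp [listAdd, listNorm]
  | cons a p ih =>
    cases q with
    | nil => simp [listAdd, listNorm]
    | cons b q =>
      have h₁ := hadd a b
      have h₂ := ih q
      simp only [listAdd, listNorm, List.map_cons, List.sum_cons] at *
      omega

theorem listNorm_map_mul (hmul : ∀ a b, ν (mul a b) ≤ ν a * ν b) (a : α) (q : List α) :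
    listNorm ν (q.map (mul a)) ≤ ν a * listNorm ν q := by
  induction q with
  | nil => simp [listNorm]
  | cons b q ih =>
    simp only [listNorm, List.map_cons, List.sum_cons, mul_add] at *
    exact Nat.add_le_add (hmul a b) ih

theorem listNorm_mul (hadd : ∀ a b, ν (add a b) ≤ ν a + ν b)
    (hmul : ∀ a b, ν (mul a b) ≤ ν a * ν b) (hzero : ν zero = 0) (p q : List α) :
    listNorm ν (listMul add mul zero p q) ≤ listNorm ν p * listNorm ν q := by
  induction p with
  | nil => simp [listMul, listNorm]
  | cons a p ih =>
    refine (listNorm_add hadd _ _).trans ?_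
    have h := listNorm_map_mul hmul a q
    have h' : listNorm ν (zero :: listMul add mul zero p q) =
        listNorm ν (listMul add mul zero p q) := by simp [listNorm, hzero]
    have h'' : listNorm ν (a :: p) = ν a + listNorm ν p := by simp [listNorm]
    rw [h', h'', add_mul]
    exact Nat.add_le_add h ih

theorem le_listNorm {p : List α} {a : α} (ha : a ∈ p) : ν a ≤ listNorm ν p :=
  List.single_le_sum (by simp) _ (List.mem_map_of_mem ha)

end ListNorm

/-- A polynomial with coefficients smaller than `M` which vanishes at `M` is zero. -/
theorem forall_mem_eq_zero_of_listEval_eq_zero {M : ℕ} (p : List ℤ)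
    (hM : listNorm Int.natAbs p < M) (hp : listEval id (M : ℤ) p = 0) : ∀ c ∈ p, c = 0 := by
  induction p with
  | nil => simp
  | cons a p ih =>
    simp only [listNorm, List.map_cons, List.sum_cons, listEval, id_eq] at hM hp ih
    have ha : a = 0 := by
      refine Int.eq_zero_of_abs_lt_dvd (m := (M : ℤ)) ⟨-listEval id (M : ℤ) p, by linarith⟩ ?_
      rw [Int.abs_eq_natAbs]; omega
    have hM0 : (M : ℤ) ≠ 0 := by omega
    rw [ha, zero_add] at hp
    simp only [List.forall_mem_cons, ha, true_and]
    exact ih (by omega) ((mul_eq_zero.mp hp).resolve_left hM0)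

/-- Polynomials in three variables, as nested coefficient lists. -/
abbrev Poly₃ := List (List (List ℤ))

namespace Poly₃

/-- Sum of polynomials. -/
def add : Poly₃ → Poly₃ → Poly₃ := listAdd (listAdd (listAdd Int.add))

/-- Product of polynomials. -/
def mul : Poly₃ → Poly₃ → Poly₃ :=
  listMul (listAdd (listAdd Int.add)) (listMul (listAdd Int.add) (listMul Int.add Int.mul 0) []) []

/-- Sum of polynomials in two variables. -/
def add₂ : List (List ℤ) → List (List ℤ) → List (List ℤ) := listAdd (listAdd Int.add)

/-- Product of polynomials in two variables. -/
def mul₂ : List (List ℤ) → List (List ℤ) → List (List ℤ) :=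
  listMul (listAdd Int.add) (listMul Int.add Int.mul 0) []

/-- The sum of the absolute values of the coefficients. -/
def norm : Poly₃ → ℕ := listNorm (listNorm (listNorm Int.natAbs))

/-- Specialization of the innermost variable to an integer. -/
def special (M : ℤ) : Poly₃ → List (List ℤ) := List.map (List.map (listEval id M))

theorem special_add (M : ℤ) (p q : Poly₃) :
    special M (add p q) = add₂ (special M p) (special M q) :=
  map_listAdd (map_listAdd (listEval_add (fun _ _ => rfl) M)) p q

theorem special_mul (M : ℤ) (p q : Poly₃) :
    special M (mul p q) = mul₂ (special M p) (special M q) :=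
  map_listMul (map_listAdd (listEval_add (fun _ _ => rfl) M))
    (map_listMul (listEval_add (fun _ _ => rfl) M)
      (listEval_mul (v := id) (zero := (0 : ℤ)) (fun _ _ => rfl) (fun _ _ => rfl) rfl M) rfl)
    rfl p q

theorem norm_add (p q : Poly₃) : norm (add p q) ≤ norm p + norm q :=
  listNorm_add (listNorm_add (listNorm_add Int.natAbs_add_le)) p q

theorem norm_mul (p q : Poly₃) : norm (mul p q) ≤ norm p * norm q :=
  listNorm_mul (listNorm_add (listNorm_add Int.natAbs_add_le))
    (listNorm_mul (listNorm_add Int.natAbs_add_le)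
      (listNorm_mul Int.natAbs_add_le (fun a b => (Int.natAbs_mul a b).le) rfl) rfl) rfl p q

variable {K : Type} [CommRing K]

/-- Value of a polynomial, the innermost lists being polynomials in `t`, the middle ones in `z`
and the outer one in `y`. -/
def eval (t y z : K) : Poly₃ → K := listEval (listEval (listEval (fun c : ℤ => (c : K)) t) z) y

variable (t y z : K)

theorem eval_add (p q : Poly₃) : eval t y z (add p q) = eval t y z p + eval t y z q :=
  listEval_add (listEval_add (listEval_add (by simp) t) z) y p q

theorem eval_mul (p q : Poly₃) : eval t y z (mul p q) = eval t y z p * eval t y z q :=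
  listEval_mul (listEval_add (listEval_add (by simp) t) z)
    (listEval_mul (listEval_add (by simp) t)
      (listEval_mul (by simp) (by simp) (by simp) t) rfl z) rfl y p q

theorem eval_eq_zero {M : ℕ} (p : Poly₃) (hM : norm p < M)
    (hp : ∀ q ∈ special M p, ∀ c ∈ q, c = 0) : eval t y z p = 0 := by
  refine listEval_eq_zero y p fun q hq => listEval_eq_zero z q fun r hr =>
    listEval_eq_zero t r fun c hc => ?_
  have hr₀ : listEval id (M : ℤ) r = 0 :=
    hp _ (List.mem_map_of_mem hq) _ (List.mem_map_of_mem hr)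
  have hrM : listNorm Int.natAbs r < M :=
    (le_listNorm hr).trans_lt ((le_listNorm (ν := listNorm (listNorm Int.natAbs)) hq).trans_lt hM)
  rw [forall_mem_eq_zero_of_listEval_eq_zero r hrM hr₀ c hc, Int.cast_zero]

end Poly₃

/-- Polynomial expressions in three variables. -/
inductive PolyExpr
  | int (c : ℤ)
  | var₁
  | var₂
  | var₃
  | add (a b : PolyExpr)
  | mul (a b : PolyExpr)

namespace PolyExpr

instance : Add PolyExpr := ⟨add⟩
instance : Mul PolyExpr := ⟨mul⟩
instance : Sub PolyExpr := ⟨fun a b => add a (mul (int (-1)) b)⟩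
instance (k : ℕ) : OfNat PolyExpr k := ⟨int k⟩

/-- Powers of expressions. -/
def npow (a : PolyExpr) : ℕ → PolyExpr
  | 0 => int 1
  | k + 1 => mul (npow a k) a

instance : Pow PolyExpr ℕ := ⟨npow⟩

/-- Substitution of expressions in a polynomial. -/
def subst (t y z : PolyExpr) (p : Poly₃) : PolyExpr :=
  p.foldr (fun q s => q.foldr (fun r s => r.foldr (fun c s => int c + t * s) 0 + z * s) 0 + y * s) 0

/-- The coefficient lists of an expression. -/
def toPoly : PolyExpr → Poly₃
  | int c => [[[c]]]
  | var₁ => [[[0, 1]]]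
  | var₂ => [[], [[1]]]
  | var₃ => [[[], [1]]]
  | add a b => Poly₃.add a.toPoly b.toPoly
  | mul a b => Poly₃.mul a.toPoly b.toPoly

/-- The coefficient lists of an expression whose first variable is specialized. -/
def toPoly₂ (M : ℤ) : PolyExpr → List (List ℤ)
  | int c => [[c]]
  | var₁ => [[M]]
  | var₂ => [[], [1]]
  | var₃ => [[0, 1]]
  | add a b => Poly₃.add₂ (a.toPoly₂ M) (b.toPoly₂ M)
  | mul a b => Poly₃.mul₂ (a.toPoly₂ M) (b.toPoly₂ M)

/-- A bound for the absolute values of the coefficients of an expression. -/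
def norm : PolyExpr → ℕ
  | int c => c.natAbs
  | var₁ => 1
  | var₂ => 1
  | var₃ => 1
  | add a b => a.norm + b.norm
  | mul a b => a.norm * b.norm

theorem special_toPoly (M : ℤ) (e : PolyExpr) : Poly₃.special M e.toPoly = e.toPoly₂ M := by
  induction e with
  | int c => simp [toPoly, Poly₃.special, toPoly₂, listEval]
  | var₁ => simp [toPoly, Poly₃.special, toPoly₂, listEval]
  | var₂ => simp [toPoly, Poly₃.special, toPoly₂, listEval]
  | var₃ => simp [toPoly, Poly₃.special, toPoly₂, listEval]
  | add a b iha ihb => rw [toPoly, Poly₃.special_add, iha, ihb, toPoly₂]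
  | mul a b iha ihb => rw [toPoly, Poly₃.special_mul, iha, ihb, toPoly₂]

theorem norm_toPoly_le (e : PolyExpr) : Poly₃.norm e.toPoly ≤ e.norm := by
  induction e with
  | int c => simp [toPoly, Poly₃.norm, listNorm, norm]
  | var₁ => simp [toPoly, Poly₃.norm, listNorm, norm]
  | var₂ => simp [toPoly, Poly₃.norm, listNorm, norm]
  | var₃ => simp [toPoly, Poly₃.norm, listNorm, norm]
  | add a b iha ihb => exact (Poly₃.norm_add _ _).trans (Nat.add_le_add iha ihb)
  | mul a b iha ihb => exact (Poly₃.norm_mul _ _).trans (Nat.mul_le_mul iha ihb)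

/-- Certificate that an expression vanishes identically: its first variable is specialized to an
integer `M` exceeding all its coefficients. -/
def isZero (M : ℕ) (e : PolyExpr) : Bool :=
  decide (e.norm < M) && (e.toPoly₂ M).all fun q => q.all fun c => decide (c = 0)

variable {K : Type} [CommRing K]

/-- Value of an expression. -/
def eval (t y z : K) : PolyExpr → K
  | int c => c
  | var₁ => t
  | var₂ => y
  | var₃ => z
  | add a b => a.eval t y z + b.eval t y z
  | mul a b => a.eval t y z * b.eval t y z

variable (t y z : K)

theorem eval_toPoly (e : PolyExpr) : Poly₃.eval t y z e.toPoly = e.eval t y z := by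
  induction e with
  | int c => simp [toPoly, Poly₃.eval, listEval, eval]
  | var₁ => simp [toPoly, Poly₃.eval, listEval, eval]
  | var₂ => simp [toPoly, Poly₃.eval, listEval, eval]
  | var₃ => simp [toPoly, Poly₃.eval, listEval, eval]
  | add a b iha ihb => rw [toPoly, Poly₃.eval_add, iha, ihb, eval]
  | mul a b iha ihb => rw [toPoly, Poly₃.eval_mul, iha, ihb, eval]

theorem eval_eq_zero {M : ℕ} {e : PolyExpr} (h : isZero M e = true) : e.eval t y z = 0 := by
  simp only [isZero, Bool.and_eq_true, decide_eq_true_eq, List.all_eq_true] at h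
  rw [← eval_toPoly]
  refine Poly₃.eval_eq_zero t y z e.toPoly (e.norm_toPoly_le.trans_lt h.1) ?_
  rw [special_toPoly]
  exact h.2

theorem eval_add (a b : PolyExpr) : (a + b).eval t y z = a.eval t y z + b.eval t y z := rfl

theorem eval_mul (a b : PolyExpr) : (a * b).eval t y z = a.eval t y z * b.eval t y z := rfl

theorem eval_sub (a b : PolyExpr) : (a - b).eval t y z = a.eval t y z - b.eval t y z := by
  change a.eval t y z + ((-1 : ℤ) : K) * b.eval t y z = _
  push_cast; ring

theorem eval_ofNat (k : ℕ) [k.AtLeastTwo] :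
    (ofNat(k) : PolyExpr).eval t y z = ofNat(k) := by
  change ((k : ℤ) : K) = _
  rw [Int.cast_natCast]; rfl

theorem eval_zero : (0 : PolyExpr).eval t y z = 0 := by
  change ((0 : ℤ) : K) = _
  simp

theorem eval_one : (1 : PolyExpr).eval t y z = 1 := by
  change ((1 : ℤ) : K) = _
  simp

theorem eval_pow (a : PolyExpr) (k : ℕ) : (a ^ k).eval t y z = a.eval t y z ^ k := by
  induction k with
  | zero => change ((1 : ℤ) : K) = _; simp
  | succ k ih => rw [pow_succ, ← ih]; rfl

theorem eval_subst (t' y' z' : PolyExpr) (p : Poly₃) : (subst t' y' z' p).eval t y z =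
    Poly₃.eval (t'.eval t y z) (y'.eval t y z) (z'.eval t y z) p := by
  induction p with
  | nil => exact eval_zero t y z
  | cons q p ihp =>
    change (_ + y' * subst t' y' z' p : PolyExpr).eval t y z = _ + _ * Poly₃.eval _ _ _ p
    rw [eval_add, eval_mul, ihp]
    congr 1
    induction q with
    | nil => exact eval_zero t y z
    | cons r q ihq =>
      rw [List.foldr_cons, eval_add, eval_mul, ihq, listEval]
      congr 1
      induction r with
      | nil => exact eval_zero t y z
      | cons c r ihr => rw [List.foldr_cons, eval_add, eval_mul, ihr, listEval]; rfl

end PolyExpr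

/-- Coefficients of the telescoping certificate along the symmetric syzygy. -/
def certEven : List (List (List ℤ)) :=
  [[[0, 0, 0, -3976535322321408, 24908437266007680, -69219000728250912, 112736849645872760,
       -119843974345320148, 87660626105934728, -45296010508641816, 16686116928558000,
       -4356963595291692, 787872257702992, -93826858338752, 6618643255840, -209489167272],
     [0, 0, -343699563626496, 6797476636296192, -32114883471213312, 74473769561467584,
       -103518502806139344, 94196798775525600, -58616352526936512, 25420515514499952,
       -7684988880569616, 1588625932618032, -214118182022976, 16956911974464, -598540477920],
     [],
     [349837055834112, -6835835962593792, 32221650262741632, -74916651837180384,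
       104006974776122880, -94035378773935368, 57935070183131064, -24838192527129828,
       7423695075981492, -1518752942506800, 202887482592564, -15950735555832, 559773081252],
     [0, 0, 0, 618369534478080, -1827917903972160, 2269167188959440, -1556675064903420,
       648762599586024, -168868330707384, 26896199249304, -2403096840144, 92426801544],
     [0, 267832331585280, -300037107230784, -303842848289904, 757177821673812, -610969378510260,
       268981827649920, -71315904584232, 11410508772432, -1019495629152, 39211370352],
     [0, -618369534478080, 1827917903972160, -2269167188959440, 1556675064903420,
       -648762599586024, 168868330707384, -26896199249304, 2403096840144, -92426801544],
     [0, 1971771766272, -1478828824704, 369707206176, -30808933848]],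
   [[0, 0, 36824953245696, -728301068174592, 3440880371915712, -7979332453014384,
       11091268157800644, -10092514154520600, 6280323485028912, -2723626662267852,
       823391665775316, -170209921351932, 22941233788176, -1816811997264, 64129336920],
     [0, 3788983364576256, -23728367315600640, 71493326925894720, -131511787657636848,
       159854132606102088, -133376186323984296, 77946641251311756, -32141688559482348,
       9299294359296480, -1846138912982364, 239438268097644, -18269967219504, 621961627056],
     [449790500358144, -8788931951906304, 41427836052096384, -96321409504946208,
       133723253283586560, -120902629852202616, 74487947378311368, -31934818963452636,
       9544750811976204, -1952682354651600, 260855334761868, -20508088571784, 719708247324],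
     [-4649354363630592, 20592729347275008, -44720129530536768, 65675384501913648,
       -70422522504170760, 54418651121995776, -29536383725981748, 11020437147077820,
       -2752301323429812, 438385815601272, -40202990255736, 1614267214560],
     [0, 612188186480640, -1304168636719872, 1139898643684416, -543334034129040,
       161388380557404, -34048222883136, 5860548800568, -815036340888, 72821116368, -2800812168],
     [4344094882778112, -19075405185365760, 35149542682871232, -35992235112493968,
       22731955829401896, -9234101506305060, 2423390165048160, -397689714667476, 37146608657928,
       -1508677809408]],
   [[0, 3272303814861312, -20492680863473280, 61744236890545440, -113578362067959096,
       138055841796179076, -115188524552531892, 67317553807951062, -27758731028643846,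
       8031208764846960, -1594392697575678, 206787595175238, -15778608053208, 537148677912],
     [2377853417161728, -19873084871059200, 69296156579846592, -139546603643025744,
       180929790087393072, -158705249086982328, 96616148700026352, -41232417437741544,
       12282049328483520, -2498519261217276, 330515395336896, -25600800596844, 880370570904],
     [-4649354363630592, 16618482511513344, -28412342413608384, 35713468375477200,
       -38193852175460352, 32105588913116208, -19196065351120896, 7779208285960272,
       -2074012702775244, 347636032238880, -33185535934320, 1375794920808],
     [-3489378769046016, 21481640357772672, -49005377830332000, 61327436253845832,
       -48438547328463768, 25501386619242576, -9072779474527272, 2151867984495768,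
       -325502979611040, 28374447409308, -1083933868248],
     [8764713288866304, -36867520558737792, 67339005535172448, -69209884397347848,
       43913518554911544, -17854974863959464, 4666809787422552, -758922413234832, 69927818122008,
       -2790489833208],
     [-3412542266090496, 9027757980299520, -10265588328663360, 6627185180708400,
       -2675943200162232, 694555717169160, -113248098477360, 10592006405904, -434078135568],
     [-1238836032580608, 2604194086830336, -2197105374252096, 962943497063856, -232610384736576,
       29468011679568, -1533111231960]],
   [[-37482541696512, 732410995992192, -3714401001608352, 8317832374238904, -10842827172760440,
       9331002577881468, -5607224348994279, 2397056332893453, -725353494709932, 151516779867090,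
       -20736654213429, 1670496213672, -59975687277],
     [2324677181815296, -26036690055159168, 86857978153228128, -149563708337763720,
       157656035317163544, -109389417820458300, 51577226029751688, -16648864047063360,
       3625839890863344, -509693326613856, 41779770306120, -1517677021476],
     [-3317834625380352, 21176350764484608, -48390746996148480, 60225762711578688,
       -47313018424272384, 24823200727341828, -8816501207820348, 2089620541645560,
       -315959812322616, 27525801322404, -1050324122232],
     [8266105415715840, -32232495683646720, 57333548638352448, -58563348231803184,
       36945333205681824, -14811298041435588, 3771558885285576, -589303695111516, 51367971193308,
       -1905286917996],
     [-6898932079522560, 16893804870169920, -17309703752299728, 9701268247470492,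
       -3250940398860924, 662983985996640, -79012363532256, 4823979907824, -101600655156],
     [-4804456643255808, 10335378166033536, -8881276689442080, 3931853253756120,
       -948673092323880, 117699663397932, -5600135015244, -48903069600],
     [-584771169540096, 1280618815246848, -1095436583531136, 481775436594144, -116375612788512,
       14734005839784, -766555615980],
     [-102766866580224, 168136577775936, -102196656788688, 29653598828700, -4166297014572,
       228621850380]],
   [[0, -4811146583177088, 19651498816406688, -35567485808062824, 37471766469068862,
       -25357505562960480, 11486508765700311, -3522791304623241, 722132183763144,
       -94730913065250, 7186469474646, -239598209466],
     [-3108169560900096, 20178276932322432, -46939444948607904, 59588239472595288,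
       -47704120236388476, 25419902075987076, -9130896479695032, 2179944111080736,
       -330920461661328, 28867390350876, -1100738741256],
     [4342889911143168, -14770958303255616, 24584858737495056, -24462942585723180,
       15128084708241120, -5872506960626460, 1414737127174140, -202001236942428, 15237079290972,
       -442822509360],
     [-1419973002379008, -2278051631900352, 10307958985502640, -12137185740615012,
       7199798228801640, -2451071521192140, 487257307686072, -52797420266976, 2416391230176],
     [-6803504585627904, 14260444162759872, -11711533039989552, 4756644356623236,
       -955837392020280, 67015544003100, 5232139416504, -771445922940],
     [-1843559654517504, 4099833830740032, -3531169050182928, 1562553243507564,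
       -380304501358320, 48598811001972, -2555592912180],
     [-263090689956864, 468248847542784, -291775274461440, 84346058323296, -11592228133332,
       613244492784],
     [9295495469568, -10070120092032, 4066779267936, -726210583560, 48414038904],
     [-4647747734784, 3485810801088, -871452700272, 72621058356]],
   [[314497596720384, -483174064384704, 422728773744816, -272150487225540, 5779980207540,
       139986335759886, -102168389220282, 34372046076984, -6140247190308, 555961215348,
       -19605685176],
     [-1540728374080896, 8053328159886240, -15158767247388072, 15256573876853694,
       -9533121930656478, 3921336868455468, -1069050574611558, 186103529322480, -18703141978752,
       823659005862],
     [1223038384977024, -9441524836785888, 18158720094717048, -16636182564678138,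
       8628291976476942, -2684108431256868, 498152259552024, -51009125572944, 2223287498124],
     [-6079254037097472, 12693374639269632, -10339779442297536, 4110644343305808,
       -778866963751800, 39168913596120, 7500752815248, -841132797120],
     [-2243500694443008, 5096873525990400, -4412822604753024, 1955533339001088,
       -476772897089412, 61122561106068, -3229640221500],
     [-77556356140032, 279271737626112, -199837503613440, 57269406747168, -7104882466836,
       304177092912],
     [39576276165888, -43062086966976, 17455461663024, -3127106785572, 209060622540],
     [-23238738673920, 17429054005440, -4357263501360, 363105291780]],
   [[0, 310663596063744, -654525322488576, 583658550611136, -312369601875408, 120065942154312,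
       -35085099758940, 7197309268380, -876343007232, 46213400772],
     [-1167836600012544, 428278620103488, 2057646949486128, -2534308199385732, 1278615360219120,
       -330426386055612, 42959635036164, -2158336976796, -12837055770],
     [-3482970510805632, 7467496771797216, -6359063219458488, 2736229562823834,
       -618189815697300, 65039370960564, -1225510924176, -188276817960],
     [-991190888126208, 2439883685219904, -2136985570588176, 939314919420108, -226270835308980,
       28729249308144, -1510289799480],
     [267879278532096, -202458708144000, 72515427725664, -20320692510888, 3985355657052,
       -330095719800],
     [58167267105024, -64610735555520, 26645326502256, -4843604528532, 327895081668],
     [-44364864741120, 33273648555840, -8318412138960, 693201011580]],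
   [[-633642941175552, 1316145917249856, -1427548087860048, 1144502744868252, -668697639526224,
       255795574549284, -58927954352652, 7367002919892, -383277807990],
     [-640614562777728, 1175134894119648, -781805060173368, 187481776305978, 21353280825492,
       -19881542945880, 3698294638500, -232289580600],
     [625474172429568, -1085659881856704, 879166670470704, -392352506100324, 97562357398044,
       -12623593871196, 662025304710],
     [236870820160128, -212057402645088, 84715276498776, -21025997032194, 3256088631642,
       -226543469922],
     [26759759685120, -34717267170432, 16003040495904, -3164517633816, 228866365728],
     [-38027026920960, 28520270190720, -7130067547680, 594172295640]],
   [[0, -123564364019712, 261697930534656, -225083224263744, 100389199336272, -24535892595060,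
       3125395178136, -162602706420],
     [955745943280128, -1910060004682368, 1596049482535200, -701459272943352, 170022035624364,
       -21534711213708, 1114989986880],
     [58730630466816, -29118843762624, -3987556295184, 4733572621932, -946274396760, 59417229564],
     [-17041741694208, 7429354333632, 818637385104, -737213774220, 83624249016],
     [-8239189166208, 6179391874656, -1544847968664, 128737330722]],
   [[323793092189952, -662174948102976, 556987379577552, -244547379510588, 59032851436944,
       -7439623978248, 383277807990],
     [6971621602176, 4278040528608, -8146762364664, 3416490699930, -584269424046, 36310529178],
     [-28449849770496, 18943093040256, -3538626116256, -4401276264, 37410848244],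
     [10774324294272, -8080743220704, 2020185805176, -168348817098]],
   [[0, 2957657649408, -2218243237056, 554560809264, -46213400772],
     [-17182582534656, 11901051017856, -2482319812896, 83624249016, 15404466924],
     [9084234208896, -6813175656672, 1703293914168, -141941159514]],
   [[-4647747734784, 3485810801088, -871452700272, 72621058356],
     [2323873867392, -1742905400544, 435726350136, -36310529178]]]

/-- Coefficients of the telescoping certificate along the antisymmetric syzygy. -/
def certOdd : List (List (List ℤ)) :=
  [[[0, 0, 0, -3976535322321408, 24908437266007680, -69219000728250912, 112736849645872760,
       -119843974345320148, 87660626105934728, -45296010508641816, 16686116928558000,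
       -4356963595291692, 787872257702992, -93826858338752, 6618643255840, -209489167272]],
   [[0, 0, 135024828567552, -2670437249973504, 12616561363690944, -29257552327719408,
       40667983245269028, -37005885233242200, 23027852778439344, -9986631094982124,
       3019102774509492, -624103044957084, 84117857223312, -6661643989968, 235140902040]],
   [[0, 1894491682288128, -11864183657800320, 35746663462947360, -65755893828818424,
       79927066303051044, -66688093161992148, 38973320625655878, -16070844279741174,
       4649647179648240, -923069456491182, 119719134048822, -9134983609752, 310980813528]],
   [[-137435986220544, 2685506985304704, -12710921726482848, 29489751442943352,
       -40799727494254872, 36793626917323716, -22640185223533251, 9705025633798341,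
       -2902443155735112, 594411591761658, -79505538662781, 6258658163472, -219910853349]],
   [[0, -2824023165296256, 11497605257942496, -20530312332619320, 21191256949807098,
       -13994686532251656, 6174833663278665, -1843198455920283, 367636207007916, -46910912361390,
       3459278964834, -111959626086]]]

section Certificate

variable {K : Type} [CommRing K]

/-- The multiplier of `z ^ 8` in the syzygy `sy_identity`. -/
def alpha (t y z : K) : K :=
  (7 * z ^ 3 + 33 * y * z ^ 2 + 55 * y ^ 2 * z + 33 * y ^ 3) * Poly₃.eval t y z certEven -
    (15 * y ^ 3 + 35 * y ^ 2 * z + 27 * y * z ^ 2 + 7 * z ^ 3) * Poly₃.eval t y z certOdd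

/-- The multiplier of `y ^ 8` in the syzygy. -/
def beta (t y z : K) : K :=
  (33 * z ^ 3 + 55 * y * z ^ 2 + 33 * y ^ 2 * z + 7 * y ^ 3) * Poly₃.eval t y z certEven +
    (15 * z ^ 3 + 35 * y * z ^ 2 + 27 * y ^ 2 * z + 7 * y ^ 3) * Poly₃.eval t y z certOdd

/-- The cofactor of `(y + z) ^ 6` in the syzygy. -/
def gamma (t y z : K) : K :=
  (7 * z ^ 5 - 9 * y * z ^ 4 + 4 * y ^ 2 * z ^ 3 + 4 * y ^ 3 * z ^ 2 - 9 * y ^ 4 * z + 7 * y ^ 5) *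
      Poly₃.eval t y z certEven +
    (7 * y ^ 5 - 15 * y ^ 4 * z + 20 * y ^ 3 * z ^ 2 - 20 * y ^ 2 * z ^ 3 + 15 * y * z ^ 4
      - 7 * z ^ 5) *
      Poly₃.eval t y z certOdd

/-- The summand annihilated by telescoping. -/
def telescoped (t x y z : K) : K :=
  x ^ 2 * (t + 1 + x) * ((t + 1 + y) * alpha t y (z + 1) + (t + 1 + z) * beta t (y + 1) z) -
    (t + 1 + y) * (t + 1 + z) * gamma t y z

/-- The combination of shifts given by the recurrence. -/
def recurrenceSum (t x y z : K) : K :=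
  (x - y) * (x - z) * (y - z) *
    (361 * t ^ 4
        * t ^ 3
        * (t - 1) ^ 3
        * (t - 2) ^ 3
        * (t - 3) ^ 3
        * (t - 4) ^ 3
      + 19 * (700 * (t - 1) ^ 4 + 1238 * (t - 1) ^ 3 + 999 * (t - 1) ^ 2 + 380 * (t - 1) + 57)
        * (t - 1) ^ 3
        * (t - 2) ^ 3
        * (t - 3) ^ 3
        * (t - 4) ^ 3
        * ((t + 1 + x) * (t + 1 + y) * (t + 1 + z))
      - (64745 * (t - 2) ^ 4 + 368006 * (t - 2) ^ 3 + 609133 * (t - 2) ^ 2 + 412756 * (t - 2)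
          + 102258)
        * (t - 2) ^ 3
        * (t - 3) ^ 3
        * (t - 4) ^ 3
        * ((t + 1 + x) * (t + 1 + y) * (t + 1 + z))
        * ((t + 1 - 1 + x) * (t + 1 - 1 + y) * (t + 1 - 1 + z))
      - 27 * (6397 * (t - 3) ^ 4 + 12198 * (t - 3) ^ 3 - 11923 * (t - 3) ^ 2 - 27360 * (t - 3)
          - 11286)
        * (t - 3) ^ 3
        * (t - 4) ^ 3
        * ((t + 1 + x) * (t + 1 + y) * (t + 1 + z))
        * ((t + 1 - 1 + x) * (t + 1 - 1 + y) * (t + 1 - 1 + z))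
        * ((t + 1 - 2 + x) * (t + 1 - 2 + y) * (t + 1 - 2 + z))
      + 729 * (64 * (t - 4) ^ 4 + 1154 * (t - 4) ^ 3 + 2425 * (t - 4) ^ 2 + 1848 * (t - 4) + 486)
        * (t - 4) ^ 3
        * ((t + 1 + x) * (t + 1 + y) * (t + 1 + z))
        * ((t + 1 - 1 + x) * (t + 1 - 1 + y) * (t + 1 - 1 + z))
        * ((t + 1 - 2 + x) * (t + 1 - 2 + y) * (t + 1 - 2 + z))
        * ((t + 1 - 3 + x) * (t + 1 - 3 + y) * (t + 1 - 3 + z))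
      + 177147 * ((t - 5) + 1) ^ 4
        * ((t + 1 + x) * (t + 1 + y) * (t + 1 + z))
        * ((t + 1 - 1 + x) * (t + 1 - 1 + y) * (t + 1 - 1 + z))
        * ((t + 1 - 2 + x) * (t + 1 - 2 + y) * (t + 1 - 2 + z))
        * ((t + 1 - 3 + x) * (t + 1 - 3 + y) * (t + 1 - 3 + z))
        * ((t + 1 - 4 + x) * (t + 1 - 4 + y) * (t + 1 - 4 + z)))

theorem syzygy (t y z : K) :
    z ^ 8 * alpha t y z + y ^ 8 * beta t y z = (y + z) ^ 6 * gamma t y z := by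
  simp only [alpha, beta, gamma]
  ring

end Certificate

namespace PolyExpr

variable {K : Type} [CommRing K] (t y z : K)

/-- The expression of `Stmt9.alpha`. -/
def alpha (t y z : PolyExpr) : PolyExpr :=
  (7 * z ^ 3 + 33 * y * z ^ 2 + 55 * y ^ 2 * z + 33 * y ^ 3) * subst t y z certEven -
    (15 * y ^ 3 + 35 * y ^ 2 * z + 27 * y * z ^ 2 + 7 * z ^ 3) * subst t y z certOdd

theorem eval_alpha (t' y' z' : PolyExpr) : (alpha t' y' z').eval t y z =
    Stmt9.alpha (t'.eval t y z) (y'.eval t y z) (z'.eval t y z) := by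
  simp only [alpha, Stmt9.alpha, eval_add, eval_sub, eval_mul, eval_pow, eval_ofNat, eval_subst]

/-- The expression of `Stmt9.beta`. -/
def beta (t y z : PolyExpr) : PolyExpr :=
  (33 * z ^ 3 + 55 * y * z ^ 2 + 33 * y ^ 2 * z + 7 * y ^ 3) * subst t y z certEven +
    (15 * z ^ 3 + 35 * y * z ^ 2 + 27 * y ^ 2 * z + 7 * y ^ 3) * subst t y z certOdd

theorem eval_beta (t' y' z' : PolyExpr) : (beta t' y' z').eval t y z =
    Stmt9.beta (t'.eval t y z) (y'.eval t y z) (z'.eval t y z) := by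
  simp only [beta, Stmt9.beta, eval_add, eval_mul, eval_pow, eval_ofNat, eval_subst]

/-- The expression of `Stmt9.gamma`. -/
def gamma (t y z : PolyExpr) : PolyExpr :=
  (7 * z ^ 5 - 9 * y * z ^ 4 + 4 * y ^ 2 * z ^ 3 + 4 * y ^ 3 * z ^ 2 - 9 * y ^ 4 * z + 7 * y ^ 5) *
      subst t y z certEven +
    (7 * y ^ 5 - 15 * y ^ 4 * z + 20 * y ^ 3 * z ^ 2 - 20 * y ^ 2 * z ^ 3 + 15 * y * z ^ 4
      - 7 * z ^ 5) *
      subst t y z certOdd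

theorem eval_gamma (t' y' z' : PolyExpr) : (gamma t' y' z').eval t y z =
    Stmt9.gamma (t'.eval t y z) (y'.eval t y z) (z'.eval t y z) := by
  simp only [gamma, Stmt9.gamma, eval_add, eval_sub, eval_mul, eval_pow, eval_ofNat, eval_subst]

/-- The expression of `Stmt9.telescoped`. -/
def telescoped (t x y z : PolyExpr) : PolyExpr :=
  x ^ 2 * (t + 1 + x) * ((t + 1 + y) * alpha t y (z + 1) + (t + 1 + z) * beta t (y + 1) z) -
    (t + 1 + y) * (t + 1 + z) * gamma t y z

theorem eval_telescoped (t' x' y' z' : PolyExpr) : (telescoped t' x' y' z').eval t y z =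
    Stmt9.telescoped (t'.eval t y z) (x'.eval t y z) (y'.eval t y z) (z'.eval t y z) := by
  simp only [telescoped, Stmt9.telescoped, eval_add, eval_sub, eval_mul, eval_pow, eval_one,
    eval_alpha, eval_beta, eval_gamma]

/-- The expression of `Stmt9.recurrenceSum`. -/
def recurrenceSum (t x y z : PolyExpr) : PolyExpr :=
  (x - y) * (x - z) * (y - z) *
    (361 * t ^ 4
        * t ^ 3
        * (t - 1) ^ 3
        * (t - 2) ^ 3
        * (t - 3) ^ 3
        * (t - 4) ^ 3
      + 19 * (700 * (t - 1) ^ 4 + 1238 * (t - 1) ^ 3 + 999 * (t - 1) ^ 2 + 380 * (t - 1) + 57)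
        * (t - 1) ^ 3
        * (t - 2) ^ 3
        * (t - 3) ^ 3
        * (t - 4) ^ 3
        * ((t + 1 + x) * (t + 1 + y) * (t + 1 + z))
      - (64745 * (t - 2) ^ 4 + 368006 * (t - 2) ^ 3 + 609133 * (t - 2) ^ 2 + 412756 * (t - 2)
          + 102258)
        * (t - 2) ^ 3
        * (t - 3) ^ 3
        * (t - 4) ^ 3
        * ((t + 1 + x) * (t + 1 + y) * (t + 1 + z))
        * ((t + 1 - 1 + x) * (t + 1 - 1 + y) * (t + 1 - 1 + z))
      - 27 * (6397 * (t - 3) ^ 4 + 12198 * (t - 3) ^ 3 - 11923 * (t - 3) ^ 2 - 27360 * (t - 3)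
          - 11286)
        * (t - 3) ^ 3
        * (t - 4) ^ 3
        * ((t + 1 + x) * (t + 1 + y) * (t + 1 + z))
        * ((t + 1 - 1 + x) * (t + 1 - 1 + y) * (t + 1 - 1 + z))
        * ((t + 1 - 2 + x) * (t + 1 - 2 + y) * (t + 1 - 2 + z))
      + 729 * (64 * (t - 4) ^ 4 + 1154 * (t - 4) ^ 3 + 2425 * (t - 4) ^ 2 + 1848 * (t - 4) + 486)
        * (t - 4) ^ 3
        * ((t + 1 + x) * (t + 1 + y) * (t + 1 + z))
        * ((t + 1 - 1 + x) * (t + 1 - 1 + y) * (t + 1 - 1 + z))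
        * ((t + 1 - 2 + x) * (t + 1 - 2 + y) * (t + 1 - 2 + z))
        * ((t + 1 - 3 + x) * (t + 1 - 3 + y) * (t + 1 - 3 + z))
      + 177147 * ((t - 5) + 1) ^ 4
        * ((t + 1 + x) * (t + 1 + y) * (t + 1 + z))
        * ((t + 1 - 1 + x) * (t + 1 - 1 + y) * (t + 1 - 1 + z))
        * ((t + 1 - 2 + x) * (t + 1 - 2 + y) * (t + 1 - 2 + z))
        * ((t + 1 - 3 + x) * (t + 1 - 3 + y) * (t + 1 - 3 + z))
        * ((t + 1 - 4 + x) * (t + 1 - 4 + y) * (t + 1 - 4 + z)))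

theorem eval_recurrenceSum (t' x' y' z' : PolyExpr) : (recurrenceSum t' x' y' z').eval t y z =
    Stmt9.recurrenceSum (t'.eval t y z) (x'.eval t y z) (y'.eval t y z) (z'.eval t y z) := by
  simp only [recurrenceSum, Stmt9.recurrenceSum, eval_add, eval_sub, eval_mul, eval_pow, eval_one,
    eval_ofNat]

end PolyExpr

theorem PolyExpr.isZero_recurrenceSum_sub_telescoped :
    isZero (2 ^ 200) (8608908 * recurrenceSum var₁ var₂ var₃ (0 - 1 - var₂ - var₃) -
      (telescoped var₁ var₂ var₃ (0 - 1 - var₂ - var₃) -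
        telescoped var₁ var₃ var₂ (0 - 1 - var₂ - var₃))) = true := by
  decide +kernel

theorem recurrenceSum_eq_telescoped {K : Type} [CommRing K] (t x y : K) :
    8608908 * recurrenceSum t x y (-1 - x - y) =
      telescoped t x y (-1 - x - y) - telescoped t y x (-1 - x - y) := by
  have h := PolyExpr.eval_eq_zero t x y PolyExpr.isZero_recurrenceSum_sub_telescoped
  rw [PolyExpr.eval_sub, PolyExpr.eval_mul, PolyExpr.eval_sub,
    PolyExpr.eval_recurrenceSum, PolyExpr.eval_telescoped, PolyExpr.eval_telescoped,
    PolyExpr.eval_ofNat] at h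
  simp only [PolyExpr.eval_sub, PolyExpr.eval_zero, PolyExpr.eval_one, zero_sub] at h
  exact sub_eq_zero.mp h

theorem sum_range_succ_eq_sum_range {K : Type} [AddCommGroup K] {f : ℕ → K} {M : ℕ} (h₀ : f 0 = 0)
    (hM : f M = 0) : ∑ i ∈ Finset.range M, f (i + 1) = ∑ i ∈ Finset.range M, f i := by
  have h := Finset.sum_range_succ' f M
  rw [Finset.sum_range_succ, h₀, hM, add_zero, add_zero] at h
  exact h.symm

theorem sum_telescoping {K : Type} [CommRing K] {N : K}
    {e₁ e₂ e₃ g g' h : ℕ → K} {α β γ : K → K → K}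
    {M : ℕ} (hs : ∀ y z, z ^ 8 * α y z + y ^ 8 * β y z = (y + z) ^ 6 * γ y z)
    (he₂ : ∀ j, e₂ (j + 1) = e₂ j + 1)
    (he₃ : ∀ s, e₃ (s + 1) + 1 = e₃ s) (he : ∀ i j, e₂ j + e₃ (i + j) = -e₁ (i + 1))
    (h₁ : e₁ 0 ^ 2 = 0) (h₂ : e₂ 0 ^ 8 = 0)
    (hg : ∀ i, e₁ (i + 1) ^ 8 * (N + e₁ (i + 1)) * g (i + 1) = g i)
    (hg' : ∀ j, e₂ (j + 1) ^ 8 * (N + e₂ (j + 1)) * g' (j + 1) = g' j)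
    (hh : ∀ s, e₃ s ^ 8 * (N + e₃ s) * h s = h (s + 1)) (hM : ∀ s, M ≤ s → h s = 0) :
    ∑ i ∈ Finset.range M, ∑ j ∈ Finset.range M,
      (e₁ i ^ 2 * (N + e₁ i) * ((N + e₂ j) * α (e₂ j) (e₃ (i + j) + 1) +
        (N + e₃ (i + j)) * β (e₂ j + 1) (e₃ (i + j))) -
        (N + e₂ j) * (N + e₃ (i + j)) * γ (e₂ j) (e₃ (i + j))) * (g i * g' j * h (i + j)) = 0 := by
  let A : ℕ → ℕ → K := fun i j => e₁ i ^ 2 * (N + e₁ i) * (N + e₂ j) * α (e₂ j) (e₃ (i + j) + 1) *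
    (g i * g' j * h (i + j))
  let B : ℕ → ℕ → K := fun i j => e₁ i ^ 2 * (N + e₁ i) * (N + e₃ (i + j)) *
    β (e₂ j + 1) (e₃ (i + j)) * (g i * g' j * h (i + j))
  let C : ℕ → ℕ → K := fun i j => (N + e₂ j) * (N + e₃ (i + j)) * γ (e₂ j) (e₃ (i + j)) *
    (g i * g' j * h (i + j))
  let D : ℕ → ℕ → K := fun i j => e₁ (i + 1) ^ 2 * (N + e₁ (i + 1)) * (N + e₂ j) *
    (N + e₃ (i + j)) * (e₂ j ^ 8 * β (e₂ j) (e₃ (i + j))) * (g (i + 1) * g' j * h (i + j))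
  have hBD : ∀ i j, B (i + 1) j = D i (j + 1) := by
    intro i j
    simp only [B, D]
    rw [← hg' j, show i + 1 + j = i + (j + 1) by ring, ← he₂ j]
    ring
  have hABC : ∀ i j, A (i + 1) j + D i j = C i j := by
    intro i j
    simp only [A, D, C]
    rw [show i + 1 + j = i + j + 1 by ring, he₃, ← hh, ← hg i]
    have := hs (e₂ j) (e₃ (i + j))
    rw [he] at this
    linear_combination e₁ (i + 1) ^ 2 * (N + e₁ (i + 1)) * (N + e₂ j) * (N + e₃ (i + j)) *
      (g (i + 1) * g' j * h (i + j)) * this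
  have hAsum : ∀ j, ∑ i ∈ Finset.range M, A (i + 1) j = ∑ i ∈ Finset.range M, A i j := fun j =>
    sum_range_succ_eq_sum_range (f := fun i => A i j) (by simp [A, h₁])
      (by simp [A, hM (M + j) (by omega)])
  have hBsum : ∀ j, ∑ i ∈ Finset.range M, B (i + 1) j = ∑ i ∈ Finset.range M, B i j := fun j =>
    sum_range_succ_eq_sum_range (f := fun i => B i j) (by simp [B, h₁])
      (by simp [B, hM (M + j) (by omega)])
  have hDsum : ∀ i, ∑ j ∈ Finset.range M, D i (j + 1) = ∑ j ∈ Finset.range M, D i j := fun i =>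
    sum_range_succ_eq_sum_range (f := fun j => D i j) (by simp [D, h₂])
      (by simp [D, hM (i + M) (by omega)])
  have hA : ∑ i ∈ Finset.range M, ∑ j ∈ Finset.range M, A i j =
      ∑ i ∈ Finset.range M, ∑ j ∈ Finset.range M, A (i + 1) j := by
    rw [Finset.sum_comm, ← Finset.sum_congr rfl fun j _ => hAsum j, Finset.sum_comm]
  have hB : ∑ i ∈ Finset.range M, ∑ j ∈ Finset.range M, B i j =
      ∑ i ∈ Finset.range M, ∑ j ∈ Finset.range M, D i j := by
    rw [Finset.sum_comm, ← Finset.sum_congr rfl fun j _ => hBsum j, Finset.sum_comm]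
    simp only [hBD, hDsum]
  calc _ = ∑ i ∈ Finset.range M, ∑ j ∈ Finset.range M, (A i j + B i j - C i j) := by
        refine Finset.sum_congr rfl fun i _ => Finset.sum_congr rfl fun j _ => ?_
        simp only [A, B, C]
        ring
    _ = ∑ i ∈ Finset.range M, ∑ j ∈ Finset.range M, (A (i + 1) j + D i j - C i j) := by
        simp only [Finset.sum_add_distrib, Finset.sum_sub_distrib, hA, hB]
    _ = 0 := by simp [hABC]

theorem sum_telescoped_eq_zero {K : Type} [CommRing K] {t ε : K} (hε : ε ^ 2 = 0)
    {g g' h : ℕ → K} {M : ℕ}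
    (hg : ∀ i : ℕ, ((i + 1 : ℕ) - ε) ^ 8 * (t + 1 + ((i + 1 : ℕ) - ε)) * g (i + 1) = g i)
    (hg' : ∀ j : ℕ, ((j + 1 : ℕ) + ε) ^ 8 * (t + 1 + ((j + 1 : ℕ) + ε)) * g' (j + 1) = g' j)
    (hh : ∀ s : ℕ, (-1 - s) ^ 8 * (t + 1 + (-1 - s)) * h s = h (s + 1))
    (hM : ∀ s, M ≤ s → h s = 0) :
    ∑ i ∈ Finset.range M, ∑ j ∈ Finset.range M,
      telescoped t (i - ε) (j + ε) (-1 - (i + j : ℕ)) * (g i * g' j * h (i + j)) = 0 :=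
  sum_telescoping (N := t + 1) (e₁ := fun i : ℕ => i - ε) (e₂ := fun j : ℕ => j + ε)
    (e₃ := fun s : ℕ => -1 - (s : K)) (syzygy t)
    (fun j => by push_cast; ring) (fun s => by push_cast; ring) (fun i j => by push_cast; ring)
    (by simpa using hε)
    (by rw [Nat.cast_zero, zero_add, show 8 = 2 * 4 by rfl, pow_mul, hε, zero_pow (by decide)])
    hg hg' hh hM

theorem sum_recurrenceSum_eq_zero {K : Type} [CommRing K] {t ε : K} (hε : ε ^ 2 = 0)
    {g g' h : ℕ → K} {M : ℕ}
    (hg : ∀ i : ℕ, ((i + 1 : ℕ) - ε) ^ 8 * (t + 1 + ((i + 1 : ℕ) - ε)) * g (i + 1) = g i)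
    (hg' : ∀ j : ℕ, ((j + 1 : ℕ) + ε) ^ 8 * (t + 1 + ((j + 1 : ℕ) + ε)) * g' (j + 1) = g' j)
    (hh : ∀ s : ℕ, (-1 - s) ^ 8 * (t + 1 + (-1 - s)) * h s = h (s + 1))
    (hM : ∀ s, M ≤ s → h s = 0) :
    8608908 * ∑ i ∈ Finset.range M, ∑ j ∈ Finset.range M,
      recurrenceSum t (i - ε) (j + ε) (-1 - (i + j : ℕ)) * (g i * g' j * h (i + j)) = 0 := by
  have h₁ := sum_telescoped_eq_zero hε hg hg' hh hM
  have h₂ := sum_telescoped_eq_zero (ε := -ε) (by rw [neg_sq, hε])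
    (by simpa only [sub_neg_eq_add] using hg') (by simpa only [← sub_eq_add_neg] using hg) hh hM
  rw [Finset.sum_comm] at h₂
  refine Eq.trans ?_ ((congrArg₂ (· - ·) h₁ h₂).trans (sub_zero 0))
  rw [← Finset.sum_sub_distrib, Finset.mul_sum]
  refine Finset.sum_congr rfl fun i _ => ?_
  rw [← Finset.sum_sub_distrib, Finset.mul_sum]
  refine Finset.sum_congr rfl fun j _ => ?_
  have hz : -1 - ((i + j : ℕ) : K) = -1 - (i - ε) - (j + ε) := by push_cast; ring
  rw [← mul_assoc, add_comm j i, sub_neg_eq_add, ← sub_eq_add_neg, hz, recurrenceSum_eq_telescoped,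
    mul_comm (g' j) (g i), sub_mul]

/-! ### The dual sum -/

/-- The nilpotent generator of the rational dual numbers. -/
abbrev dualEps : DualNumber ℚ := DualNumber.eps

/-- The value of a power series at `r • ε` in the ring of dual numbers. -/
def dualEval (r : ℚ) : PowerSeries ℚ →+* DualNumber ℚ where
  toFun f := TrivSqZeroExt.inl (PowerSeries.coeff 0 f) +
    TrivSqZeroExt.inr (r * PowerSeries.coeff 1 f)
  map_one' := by ext <;> simp [PowerSeries.coeff_one]
  map_zero' := by ext <;> simp
  map_add' f g := by ext <;> simp [mul_add]
  map_mul' f g := by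
    ext
    · simp
    · simp [PowerSeries.coeff_mul, Finset.Nat.antidiagonal_succ]
      ring

theorem fst_dualEval (r : ℚ) (f : PowerSeries ℚ) :
    (dualEval r f).fst = PowerSeries.coeff 0 f := by simp [dualEval]

theorem snd_dualEval (r : ℚ) (f : PowerSeries ℚ) :
    (dualEval r f).snd = r * PowerSeries.coeff 1 f := by simp [dualEval]

theorem dualEval_X (r : ℚ) : dualEval r PowerSeries.X = TrivSqZeroExt.inr r := by
  ext
  · simp [fst_dualEval]
  · simp [snd_dualEval]

/-- The local factor `1 / (∏_{a ≤ i} (a - y) ^ 8 ∏_{a ≤ n + 1 + i} (a - y))`. -/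
def localFactor (n i : ℕ) : PowerSeries ℚ :=
  ((∏ a ∈ Finset.range i, (((a + 1 : ℕ) : PowerSeries ℚ) - PowerSeries.X) ^ 8) *
    ∏ a ∈ Finset.range (n + 1 + i), (((a + 1 : ℕ) : PowerSeries ℚ) - PowerSeries.X))⁻¹

theorem constantCoeff_natCast_sub_X (a : ℕ) :
    PowerSeries.constantCoeff (((a + 1 : ℕ) : PowerSeries ℚ) - PowerSeries.X) ≠ 0 := by
  rw [map_sub, map_natCast, PowerSeries.constantCoeff_X, sub_zero]
  exact Nat.cast_ne_zero.mpr a.succ_ne_zero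

theorem inv_mul_mul_cancel {u v : PowerSeries ℚ} (hu : PowerSeries.constantCoeff u ≠ 0) :
    u * (v * u)⁻¹ = v⁻¹ := by
  rw [PowerSeries.mul_inv_rev, ← mul_assoc, PowerSeries.mul_inv_cancel _ hu, one_mul]

theorem localFactor_succ_right (n i : ℕ) :
    (((i + 1 : ℕ) : PowerSeries ℚ) - PowerSeries.X) ^ 8 *
      (((n + 1 + i + 1 : ℕ) : PowerSeries ℚ) - PowerSeries.X) * localFactor n (i + 1) =
      localFactor n i := by
  rw [localFactor, localFactor, Finset.prod_range_succ, ← add_assoc, Finset.prod_range_succ,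
    mul_mul_mul_comm]
  refine inv_mul_mul_cancel ?_
  rw [map_mul, map_pow]
  exact mul_ne_zero (pow_ne_zero _ (constantCoeff_natCast_sub_X i)) (constantCoeff_natCast_sub_X _)

theorem localFactor_succ_left (n i : ℕ) :
    (((n + 1 + i + 1 : ℕ) : PowerSeries ℚ) - PowerSeries.X) * localFactor (n + 1) i =
      localFactor n i := by
  rw [localFactor, localFactor, add_right_comm (n + 1) 1 i, Finset.prod_range_succ, ← mul_assoc]
  exact inv_mul_mul_cancel (constantCoeff_natCast_sub_X _)

/-- The factor `s ! ^ 8 / (n - s) !`, which vanishes for `n < s`. -/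
def farFactor (n s : ℕ) : ℚ :=
  if s ≤ n then (s.factorial : ℚ) ^ 8 / ((n - s).factorial : ℚ) else 0

theorem farFactor_of_lt {n s : ℕ} (h : n < s) : farFactor n s = 0 := if_neg (by omega)

theorem farFactor_succ_left (n s : ℕ) :
    ((n : ℚ) + 1 - s) * farFactor (n + 1) s = farFactor n s := by
  rcases lt_trichotomy s (n + 1) with h | h | h
  · obtain ⟨k, rfl⟩ := Nat.exists_eq_add_of_le (Nat.le_of_lt_succ h)
    have hk : ((k : ℚ) + 1) ≠ 0 := by positivity
    rw [farFactor, farFactor, if_pos (by omega), if_pos (by omega),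
      show s + k + 1 - s = k + 1 by omega, show s + k - s = k by omega, Nat.factorial_succ]
    push_cast
    field_simp
    ring
  · subst h
    rw [farFactor_of_lt (Nat.lt_succ_self n)]
    push_cast
    ring
  · rw [farFactor_of_lt h, farFactor_of_lt (by omega), mul_zero]

theorem farFactor_succ_right (n s : ℕ) :
    (-1 - (s : ℚ)) ^ 8 * (n + 1 + (-1 - s)) * farFactor n s = farFactor n (s + 1) := by
  rcases lt_trichotomy s n with h | h | h
  · obtain ⟨k, rfl⟩ := Nat.exists_eq_add_of_lt h
    have hk : ((k : ℚ) + 1) ≠ 0 := by positivity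
    rw [farFactor, farFactor, if_pos (by omega), if_pos (by omega),
      show s + k + 1 - s = k + 1 by omega, show s + k + 1 - (s + 1) = k by omega,
      Nat.factorial_succ, Nat.factorial_succ, mul_comm (s + 1)]
    push_cast
    field_simp
    ring
  · subst h
    rw [farFactor_of_lt (Nat.lt_succ_self s)]
    ring
  · rw [farFactor_of_lt h, farFactor_of_lt (by omega), mul_zero]

/-- The weight of the pair `(i, j)` in the dual sum. -/
def dualWeight (n i j : ℕ) : DualNumber ℚ :=
  dualEval 1 (localFactor n i) * dualEval (-1) (localFactor n j) *
    algebraMap ℚ (DualNumber ℚ) (farFactor n (i + j))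

/-- The Vandermonde factor of the pair `(i, j)` in the dual sum. -/
def dualVand (i j : ℕ) : DualNumber ℚ :=
  (((i : DualNumber ℚ) - dualEps) - (j + dualEps)) *
    ((i - dualEps) - (-1 - (i + j : ℕ))) * ((j + dualEps) - (-1 - (i + j : ℕ)))

/-- The dual sum. -/
def dualSum (n : ℕ) : ℚ :=
  (∑ i ∈ Finset.range (n + 1), ∑ j ∈ Finset.range (n + 1), dualVand i j * dualWeight n i j).snd

theorem dualWeight_succ (n i j : ℕ) :
    ((n + 1 + 1 + (i - dualEps)) * (n + 1 + 1 + (j + dualEps)) *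
      (n + 1 + 1 + (-1 - (i + j : ℕ)))) * dualWeight (n + 1) i j = dualWeight n i j := by
  have h₁ := congrArg (dualEval 1) (localFactor_succ_left n i)
  have h₂ := congrArg (dualEval (-1)) (localFactor_succ_left n j)
  have h₃ := congrArg (algebraMap ℚ (DualNumber ℚ)) (farFactor_succ_left n (i + j))
  rw [map_mul, map_sub, map_natCast, dualEval_X] at h₁ h₂
  rw [map_mul, map_sub, map_add, map_one, map_natCast, map_natCast] at h₃
  rw [TrivSqZeroExt.inr_neg] at h₂
  rw [dualWeight, dualWeight, ← h₁, ← h₂, ← h₃]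
  simp only [dualEps, DualNumber.eps]
  push_cast
  ring

theorem dualSum_eq_sum_range {n M : ℕ} (h : n + 1 ≤ M) : dualSum n =
    (∑ i ∈ Finset.range M, ∑ j ∈ Finset.range M, dualVand i j * dualWeight n i j).snd := by
  have h0 : ∀ i j, n + 1 ≤ i + j → dualVand i j * dualWeight n i j = 0 := fun i j hij => by
    rw [dualWeight, farFactor_of_lt (by omega), map_zero, mul_zero, mul_zero]
  rw [dualSum]
  congr 1
  rw [← Finset.sum_subset (Finset.range_subset_range.mpr h) fun i _ hi =>
    Finset.sum_eq_zero fun j _ => h0 i j (by rw [Finset.mem_range] at hi; omega)]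
  exact Finset.sum_congr rfl fun i _ =>
    Finset.sum_subset (Finset.range_subset_range.mpr h) fun j _ hj => h0 i j (by
      rw [Finset.mem_range] at hj; omega)

theorem sum_recurrenceSum_mul_dualWeight (n : ℕ) :
    ∑ i ∈ Finset.range (n + 1), ∑ j ∈ Finset.range (n + 1),
      recurrenceSum (n : DualNumber ℚ) (i - dualEps) (j + dualEps)
        (-1 - (i + j : ℕ)) * dualWeight n i j = 0 := by
  have h := sum_recurrenceSum_eq_zero (K := DualNumber ℚ) (t := n) (ε := dualEps)
    (g := fun i => dualEval 1 (localFactor n i)) (g' := fun j => dualEval (-1) (localFactor n j))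
    (h := fun s => algebraMap ℚ (DualNumber ℚ) (farFactor n s)) (M := n + 1)
    (by rw [pow_two, DualNumber.eps_mul_eps]) ?_ ?_ ?_ ?_
  · have h8 : (8608908 : DualNumber ℚ) = algebraMap ℚ (DualNumber ℚ) 8608908 := by rw [map_ofNat]
    rw [h8, ← Algebra.smul_def] at h
    exact (smul_eq_zero.mp h).resolve_left (by norm_num)
  · intro i
    have h := congrArg (dualEval 1) (localFactor_succ_right n i)
    rw [map_mul, map_mul, map_pow, map_sub, map_sub, map_natCast, map_natCast, dualEval_X] at h
    rw [← h, dualEps, DualNumber.eps]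
    push_cast
    ring
  · intro i
    have h := congrArg (dualEval (-1)) (localFactor_succ_right n i)
    rw [map_mul, map_mul, map_pow, map_sub, map_sub, map_natCast, map_natCast, dualEval_X,
      TrivSqZeroExt.inr_neg] at h
    rw [← h, dualEps, DualNumber.eps]
    push_cast
    ring
  · intro s
    rw [← farFactor_succ_right n s]
    simp
  · intro s hs
    rw [farFactor_of_lt (by omega), map_zero]

theorem recurrenceSum_mul {K : Type} [CommRing K] {t x y z w₀ w₁ w₂ w₃ w₄ w₅ : K}
    (h₀ : ((t + 1 + x) * (t + 1 + y) * (t + 1 + z)) * w₀ = w₁)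
    (h₁ : ((t + 1 - 1 + x) * (t + 1 - 1 + y) * (t + 1 - 1 + z)) * w₁ = w₂)
    (h₂ : ((t + 1 - 2 + x) * (t + 1 - 2 + y) * (t + 1 - 2 + z)) * w₂ = w₃)
    (h₃ : ((t + 1 - 3 + x) * (t + 1 - 3 + y) * (t + 1 - 3 + z)) * w₃ = w₄)
    (h₄ : ((t + 1 - 4 + x) * (t + 1 - 4 + y) * (t + 1 - 4 + z)) * w₄ = w₅) :
    recurrenceSum t x y z * w₀ =
      (361 * t ^ 4 * t ^ 3 * (t - 1) ^ 3 * (t - 2) ^ 3 * (t - 3) ^ 3 * (t - 4) ^ 3)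
        * ((x - y) * (x - z) * (y - z) * w₀)
      + (19 * (700 * (t - 1) ^ 4 + 1238 * (t - 1) ^ 3 + 999 * (t - 1) ^ 2 + 380 * (t - 1) + 57)
          * (t - 1) ^ 3 * (t - 2) ^ 3 * (t - 3) ^ 3 * (t - 4) ^ 3)
        * ((x - y) * (x - z) * (y - z) * w₁)
      - ((64745 * (t - 2) ^ 4 + 368006 * (t - 2) ^ 3 + 609133 * (t - 2) ^ 2 + 412756 * (t - 2)
          + 102258) * (t - 2) ^ 3 * (t - 3) ^ 3 * (t - 4) ^ 3)
        * ((x - y) * (x - z) * (y - z) * w₂)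
      - (27 * (6397 * (t - 3) ^ 4 + 12198 * (t - 3) ^ 3 - 11923 * (t - 3) ^ 2 - 27360 * (t - 3)
          - 11286) * (t - 3) ^ 3 * (t - 4) ^ 3)
        * ((x - y) * (x - z) * (y - z) * w₃)
      + (729 * (64 * (t - 4) ^ 4 + 1154 * (t - 4) ^ 3 + 2425 * (t - 4) ^ 2 + 1848 * (t - 4) + 486)
          * (t - 4) ^ 3)
        * ((x - y) * (x - z) * (y - z) * w₄)
      + (177147 * ((t - 5) + 1) ^ 4) * ((x - y) * (x - z) * (y - z) * w₅) := by
  subst h₀ h₁ h₂ h₃ h₄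
  rw [recurrenceSum]
  generalize (x - y) * (x - z) * (y - z) = v
  generalize (t + 1 + x) * (t + 1 + y) * (t + 1 + z) = p₀
  generalize (t + 1 - 1 + x) * (t + 1 - 1 + y) * (t + 1 - 1 + z) = p₁
  generalize (t + 1 - 2 + x) * (t + 1 - 2 + y) * (t + 1 - 2 + z) = p₂
  generalize (t + 1 - 3 + x) * (t + 1 - 3 + y) * (t + 1 - 3 + z) = p₃
  generalize (t + 1 - 4 + x) * (t + 1 - 4 + y) * (t + 1 - 4 + z) = p₄
  generalize t - 1 = t₁
  generalize t - 2 = t₂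
  generalize t - 3 = t₃
  generalize t - 4 = t₄
  generalize t - 5 = t₅
  ring

theorem snd_algebraMap_mul (r : ℚ) (x : DualNumber ℚ) :
    (algebraMap ℚ (DualNumber ℚ) r * x).snd = r * x.snd := by
  rw [← Algebra.smul_def, TrivSqZeroExt.snd_smul, smul_eq_mul]

theorem dualSum_recurrence (m : ℕ) {t : ℚ} (ht : t = (m + 5 : ℕ)) :
    361 * t ^ 4 * t ^ 3 * (t - 1) ^ 3 * (t - 2) ^ 3 * (t - 3) ^ 3 * (t - 4) ^ 3 *
        dualSum (m + 5)
      + 19 * (700 * (t - 1) ^ 4 + 1238 * (t - 1) ^ 3 + 999 * (t - 1) ^ 2 + 380 * (t - 1) + 57) *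
        (t - 1) ^ 3 * (t - 2) ^ 3 * (t - 3) ^ 3 * (t - 4) ^ 3 * dualSum (m + 4)
      - (64745 * (t - 2) ^ 4 + 368006 * (t - 2) ^ 3 + 609133 * (t - 2) ^ 2 + 412756 * (t - 2)
        + 102258) * (t - 2) ^ 3 * (t - 3) ^ 3 * (t - 4) ^ 3 * dualSum (m + 3)
      - 27 * (6397 * (t - 3) ^ 4 + 12198 * (t - 3) ^ 3 - 11923 * (t - 3) ^ 2 - 27360 * (t - 3)
        - 11286) * (t - 3) ^ 3 * (t - 4) ^ 3 * dualSum (m + 2)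
      + 729 * (64 * (t - 4) ^ 4 + 1154 * (t - 4) ^ 3 + 2425 * (t - 4) ^ 2 + 1848 * (t - 4) + 486) *
        (t - 4) ^ 3 * dualSum (m + 1)
      + 177147 * (t - 5 + 1) ^ 4 * dualSum m = 0 := by
  have h := sum_recurrenceSum_mul_dualWeight (m + 5)
  have ht' : ((m + 5 : ℕ) : DualNumber ℚ) = algebraMap ℚ (DualNumber ℚ) t := by
    rw [ht, map_natCast]
  have hs (a : ℕ) (ha : a ≤ 5) := dualSum_eq_sum_range (n := m + a) (M := m + 5 + 1) (by omega)
  have hrec (i j : ℕ) := recurrenceSum_mul (t := ((m + 5 : ℕ) : DualNumber ℚ))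
    (x := i - dualEps) (y := j + dualEps) (z := -1 - (i + j : ℕ))
    (w₀ := dualWeight (m + 5) i j) (w₁ := dualWeight (m + 4) i j) (w₂ := dualWeight (m + 3) i j)
    (w₃ := dualWeight (m + 2) i j) (w₄ := dualWeight (m + 1) i j) (w₅ := dualWeight (m + 0) i j)
    (by rw [← dualWeight_succ (m + 4) i j]; push_cast; ring)
    (by rw [← dualWeight_succ (m + 3) i j]; push_cast; ring)
    (by rw [← dualWeight_succ (m + 2) i j]; push_cast; ring)
    (by rw [← dualWeight_succ (m + 1) i j]; push_cast; ring)
    (by rw [← dualWeight_succ (m + 0) i j]; push_cast; ring)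
  simp only [hrec, ← dualVand.eq_1, Finset.sum_add_distrib, Finset.sum_sub_distrib,
    ← Finset.mul_sum] at h
  simp only [ht', ← map_ofNat (algebraMap ℚ (DualNumber ℚ)),
    ← map_one (algebraMap ℚ (DualNumber ℚ)),
    ← map_sub, ← map_add, ← map_mul, ← map_pow] at h
  have h' := congrArg TrivSqZeroExt.snd h
  simp only [TrivSqZeroExt.snd_add, TrivSqZeroExt.snd_sub, snd_algebraMap_mul,
    ← hs 5 (by omega), ← hs 4 (by omega), ← hs 3 (by omega), ← hs 2 (by omega),
    ← hs 1 (by omega), ← hs 0 (by omega), TrivSqZeroExt.snd_zero] at h'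
  exact h'

/-- The coefficients of the regular solution of the recurrence. -/
def solutionCoeff (n : ℕ) : ℚ := (-1) ^ (n + 1) * ((n.factorial : ℚ) ^ 3 / 2) * dualSum n

theorem solutionCoeff_recurrence (m : ℕ) :
    361 * ((m : ℚ) + 5) ^ 4 * solutionCoeff (m + 5)
      - 19 * (700 * ((m : ℚ) + 4) ^ 4 + 1238 * ((m : ℚ) + 4) ^ 3 + 999 * ((m : ℚ) + 4) ^ 2
        + 380 * ((m : ℚ) + 4) + 57) * solutionCoeff (m + 4)
      + (-64745 * ((m : ℚ) + 3) ^ 4 - 368006 * ((m : ℚ) + 3) ^ 3 - 609133 * ((m : ℚ) + 3) ^ 2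
        - 412756 * ((m : ℚ) + 3) - 102258) * solutionCoeff (m + 3)
      + 27 * (6397 * ((m : ℚ) + 2) ^ 4 + 12198 * ((m : ℚ) + 2) ^ 3 - 11923 * ((m : ℚ) + 2) ^ 2
        - 27360 * ((m : ℚ) + 2) - 11286) * solutionCoeff (m + 2)
      + 729 * (64 * ((m : ℚ) + 1) ^ 4 + 1154 * ((m : ℚ) + 1) ^ 3 + 2425 * ((m : ℚ) + 1) ^ 2
        + 1848 * ((m : ℚ) + 1) + 486) * solutionCoeff (m + 1)
      - 177147 * ((m : ℚ) + 1) ^ 4 * solutionCoeff m = 0 := by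
  have h := dualSum_recurrence m rfl
  simp only [solutionCoeff, Nat.factorial_succ]
  push_cast at h ⊢
  simp only [show (m : ℚ) + 5 - 1 = m + 4 by ring, show (m : ℚ) + 5 - 2 = m + 3 by ring,
    show (m : ℚ) + 5 - 3 = m + 2 by ring, show (m : ℚ) + 5 - 4 = m + 1 by ring,
    show (m : ℚ) + 5 - 5 = m by ring] at h
  have e (k : ℚ) : (m : ℚ) + k + 1 = m + (k + 1) := by ring
  simp only [e] at h ⊢
  norm_num only at h ⊢
  have s : ∀ k, (-1 : ℚ) ^ (m + k) = (-1) ^ m * (-1) ^ k := pow_add _ _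
  simp only [s, add_assoc m]
  generalize (m : ℚ) + 1 = t₁ at *
  generalize (m : ℚ) + 2 = t₂ at *
  generalize (m : ℚ) + 3 = t₃ at *
  generalize (m : ℚ) + 4 = t₄ at *
  generalize (m : ℚ) + 5 = t₅ at *
  linear_combination ((-1) ^ m * (m.factorial : ℚ) ^ 3 / 2) * h

/-! ### Initial values -/

theorem dualEval_prod_natCast_sub_X (r : ℚ) (k : ℕ) :
    dualEval r (∏ a ∈ Finset.range k, (((a + 1 : ℕ) : PowerSeries ℚ) - PowerSeries.X)) =
      TrivSqZeroExt.inl (k.factorial : ℚ) * (1 - TrivSqZeroExt.inr (r * harmonic k)) := by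
  induction k with
  | zero => simp
  | succ k ih =>
    have hk : (k : ℚ) + 1 ≠ 0 := by positivity
    rw [Finset.prod_range_succ, map_mul, ih, map_sub, map_natCast, dualEval_X, Nat.factorial_succ,
      harmonic_succ]
    ext
    · simp
      ring
    · simp
      field_simp
      ring

theorem dualEval_localFactor (r : ℚ) (n i : ℕ) :
    dualEval r (localFactor n i) =
      TrivSqZeroExt.inl ((i.factorial : ℚ) ^ 8 * (n + 1 + i).factorial)⁻¹ *
        (1 + TrivSqZeroExt.inr (r * (8 * harmonic i + harmonic (n + 1 + i)))) := by
  have hi : (i.factorial : ℚ) ≠ 0 := by positivity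
  have hn : ((n + 1 + i).factorial : ℚ) ≠ 0 := by positivity
  have hmul := congrArg (dualEval r) (PowerSeries.mul_inv_cancel
    ((∏ a ∈ Finset.range i, (((a + 1 : ℕ) : PowerSeries ℚ) - PowerSeries.X) ^ 8) *
      ∏ a ∈ Finset.range (n + 1 + i), (((a + 1 : ℕ) : PowerSeries ℚ) - PowerSeries.X)) (by
    simp only [map_mul, map_prod, map_pow]
    exact mul_ne_zero (Finset.prod_ne_zero_iff.mpr fun a _ =>
      pow_ne_zero _ (constantCoeff_natCast_sub_X a))
      (Finset.prod_ne_zero_iff.mpr fun a _ => constantCoeff_natCast_sub_X a)))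
  rw [← localFactor, map_mul, map_one] at hmul
  refine left_inv_eq_right_inv ((mul_comm _ _).trans hmul) ?_
  rw [map_mul, Finset.prod_pow, map_pow, dualEval_prod_natCast_sub_X, dualEval_prod_natCast_sub_X]
  ext
  · simp
    field_simp
  · simp
    field_simp
    ring

theorem dualSum_eq (n : ℕ) : dualSum n =
    ∑ i ∈ Finset.range (n + 1), ∑ j ∈ Finset.range (n + 1),
      ((i.factorial : ℚ) ^ 8 * (n + 1 + i).factorial)⁻¹ *
        ((j.factorial : ℚ) ^ 8 * (n + 1 + j).factorial)⁻¹ * farFactor n (i + j) *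
        (((i : ℚ) - j) ^ 2 - 2 * (2 * i + j + 1) * (i + 2 * j + 1) +
          (i - j) * (2 * i + j + 1) * (i + 2 * j + 1) *
            (8 * harmonic i + harmonic (n + 1 + i) - (8 * harmonic j + harmonic (n + 1 + j)))) := by
  rw [dualSum, TrivSqZeroExt.snd_sum]
  refine Finset.sum_congr rfl fun i _ => ?_
  rw [TrivSqZeroExt.snd_sum]
  refine Finset.sum_congr rfl fun j _ => ?_
  rw [dualVand, dualWeight, dualEval_localFactor, dualEval_localFactor]
  simp [TrivSqZeroExt.algebraMap_eq_inl]
  ring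

theorem solutionCoeff_zero : solutionCoeff 0 = 1 := by
  rw [solutionCoeff, dualSum_eq]
  decide +kernel

theorem solutionCoeff_one : solutionCoeff 1 = 3 := by
  rw [solutionCoeff, dualSum_eq]
  decide +kernel

theorem solutionCoeff_two : solutionCoeff 2 = 51 := by
  rw [solutionCoeff, dualSum_eq]
  decide +kernel

theorem solutionCoeff_three : solutionCoeff 3 = 1029 := by
  rw [solutionCoeff, dualSum_eq]
  decide +kernel

theorem solutionCoeff_four : solutionCoeff 4 = 25299 := by
  rw [solutionCoeff, dualSum_eq]
  decide +kernel

/-! ### The differential equation -/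

theorem coeff_th (f : PowerSeries ℚ) (d : ℕ) :
    PowerSeries.coeff d (th f) = d * PowerSeries.coeff d f := by
  rw [th, PowerSeries.coeff_mk]

theorem coeff_ofNat_mul (a : ℕ) [a.AtLeastTwo] (f : PowerSeries ℚ) (d : ℕ) :
    PowerSeries.coeff d (ofNat(a) * f) = ofNat(a) * PowerSeries.coeff d f := by
  rw [← map_ofNat (PowerSeries.C (R := ℚ)) a, PowerSeries.coeff_C_mul]

theorem coeff_X_mul_eq_ite (f : PowerSeries ℚ) (d : ℕ) :
    PowerSeries.coeff d (PowerSeries.X * f) = if 1 ≤ d then PowerSeries.coeff (d - 1) f else 0 := by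
  rw [← PowerSeries.coeff_X_pow_mul', pow_one]

theorem picardFuchs_solutionCoeff {I₀ : PowerSeries ℚ} (hI : I₀ = PowerSeries.mk solutionCoeff) :
    361 * th^[4] I₀
      - 19 * PowerSeries.X * (700 * th^[4] I₀ + 1238 * th^[3] I₀ + 999 * th^[2] I₀
        + 380 * th I₀ + 57 * I₀)
      + PowerSeries.X ^ 2 * (-64745 * th^[4] I₀ - 368006 * th^[3] I₀ - 609133 * th^[2] I₀
        - 412756 * th I₀ - 102258 * I₀)
      + 27 * PowerSeries.X ^ 3 * (6397 * th^[4] I₀ + 12198 * th^[3] I₀ - 11923 * th^[2] I₀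
        - 27360 * th I₀ - 11286 * I₀)
      + 729 * PowerSeries.X ^ 4 * (64 * th^[4] I₀ + 1154 * th^[3] I₀ + 2425 * th^[2] I₀
        + 1848 * th I₀ + 486 * I₀)
      - 177147 * PowerSeries.X ^ 5 * ((fun g => th g + g) ((fun g => th g + g)
        ((fun g => th g + g) ((fun g => th g + g) (I₀))))) = 0 := by
  have hc (d : ℕ) : PowerSeries.coeff d I₀ = solutionCoeff d := by rw [hI, PowerSeries.coeff_mk]
  ext N
  simp only [Function.iterate_succ, Function.iterate_zero, Function.comp_apply, id_eq, mul_assoc,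
    neg_mul, map_add, map_sub, map_neg, coeff_ofNat_mul, PowerSeries.coeff_X_pow_mul',
    coeff_X_mul_eq_ite, coeff_th, hc, map_zero]
  match N with
  | 0 => simp
  | 1 => norm_num [solutionCoeff_zero, solutionCoeff_one]
  | 2 => norm_num [solutionCoeff_zero, solutionCoeff_one, solutionCoeff_two]
  | 3 => norm_num [solutionCoeff_zero, solutionCoeff_one, solutionCoeff_two, solutionCoeff_three]
  | 4 =>
    norm_num [solutionCoeff_zero, solutionCoeff_one, solutionCoeff_two, solutionCoeff_three,
      solutionCoeff_four]
  | m + 5 =>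
    have h := solutionCoeff_recurrence m
    simp only [show m + 5 - 1 = m + 4 by omega, show m + 5 - 2 = m + 3 by omega,
      show m + 5 - 3 = m + 2 by omega, show m + 5 - 4 = m + 1 by omega,
      show m + 5 - 5 = m by omega, show 1 ≤ m + 5 by omega, show 2 ≤ m + 5 by omega,
      show 3 ≤ m + 5 by omega, show 4 ≤ m + 5 by omega, show 5 ≤ m + 5 by omega, if_true]
    push_cast
    linear_combination h

/-! ### Sums of residues -/

section Residue

open Polynomial in
/-- The Taylor expansion of a polynomial at `r`, as a power series. -/
def taylorSeries (r : ℚ) : ℚ[X] →+* PowerSeries ℚ :=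
  Polynomial.eval₂RingHom (PowerSeries.C (R := ℚ)) (PowerSeries.X + PowerSeries.C r)

/-- The part away from `r` of `∏_{a ∈ s} (z - a) ^ e a`, expanded at `r`. -/
def awayFactor (s : Finset ℚ) (e : ℚ → ℕ) (r : ℚ) : PowerSeries ℚ :=
  ∏ a ∈ s.erase r, (PowerSeries.X + PowerSeries.C (r - a)) ^ e a

/-- The sum of the residues of `p / ∏_{a ∈ s} (z - a) ^ e a`. -/
def residueSum (s : Finset ℚ) (e : ℚ → ℕ) : Polynomial ℚ →ₗ[ℚ] ℚ where
  toFun p := ∑ r ∈ s, PowerSeries.coeff (e r)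
    (PowerSeries.X * (taylorSeries r p * (awayFactor s e r)⁻¹))
  map_add' p q := by simp only [map_add, add_mul, mul_add, Finset.sum_add_distrib]
  map_smul' c p := by
    rw [RingHom.id_apply, smul_eq_mul, Finset.mul_sum]
    refine Finset.sum_congr rfl fun r _ => ?_
    rw [Polynomial.smul_eq_C_mul, RingHom.map_mul, taylorSeries, Polynomial.coe_eval₂RingHom,
      Polynomial.eval₂_C, mul_assoc, mul_left_comm, PowerSeries.coeff_C_mul]

theorem residueSum_apply (s : Finset ℚ) (e : ℚ → ℕ) (p : Polynomial ℚ) :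
    residueSum s e p = ∑ r ∈ s, PowerSeries.coeff (e r)
      (PowerSeries.X * (taylorSeries r p * (awayFactor s e r)⁻¹)) := rfl

theorem taylorSeries_X_sub_C (r a : ℚ) :
    taylorSeries r (Polynomial.X - Polynomial.C a) =
      PowerSeries.X + PowerSeries.C (r - a) := by
  rw [taylorSeries, Polynomial.coe_eval₂RingHom, Polynomial.eval₂_sub, Polynomial.eval₂_X,
    Polynomial.eval₂_C, map_sub, add_sub_assoc]

theorem constantCoeff_taylorSeries (r : ℚ) (p : Polynomial ℚ) :
    PowerSeries.constantCoeff (taylorSeries r p) = p.eval r := by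
  rw [taylorSeries, Polynomial.coe_eval₂RingHom, Polynomial.hom_eval₂]
  simp [Polynomial.eval₂_eq_eval_map]

theorem constantCoeff_X_add_C_sub {r a : ℚ} (h : r ≠ a) :
    PowerSeries.constantCoeff (PowerSeries.X + PowerSeries.C (r - a)) ≠ 0 := by
  simpa [sub_eq_zero] using h

theorem residueSum_X_sub_C_mul {s : Finset ℚ} {a : ℚ} (ha : a ∈ s) (e : ℚ → ℕ)
    (p : Polynomial ℚ) :
    residueSum s (e + Pi.single a 1) ((Polynomial.X - Polynomial.C a) * p) = residueSum s e p := by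
  rw [residueSum_apply, residueSum_apply]
  refine Finset.sum_congr rfl fun r _ => ?_
  rw [RingHom.map_mul, taylorSeries_X_sub_C]
  rcases eq_or_ne r a with rfl | h
  · have haway : awayFactor s (e + Pi.single r 1) r = awayFactor s e r :=
      Finset.prod_congr rfl fun b hb => by
        rw [Pi.add_apply, Pi.single_eq_of_ne (Finset.ne_of_mem_erase hb), add_zero]
    rw [haway, sub_self, map_zero, add_zero, Pi.add_apply, Pi.single_eq_same,
      PowerSeries.coeff_succ_X_mul, mul_assoc]
  · have haway : awayFactor s (e + Pi.single a 1) r =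
        awayFactor s e r * (PowerSeries.X + PowerSeries.C (r - a)) := by
      simp only [awayFactor, Pi.add_apply, pow_add, Finset.prod_mul_distrib]
      congr 1
      rw [Finset.prod_eq_single a (fun b _ hb => by rw [Pi.single_eq_of_ne hb, pow_zero])
        (fun hn => (hn (Finset.mem_erase.mpr ⟨h.symm, ha⟩)).elim), Pi.single_eq_same, pow_one]
    rw [haway, Pi.add_apply, Pi.single_eq_of_ne h, add_zero, mul_right_comm,
      inv_mul_mul_cancel (constantCoeff_X_add_C_sub h), mul_comm (awayFactor s e r)⁻¹]

theorem residueSum_congr {s : Finset ℚ} {e e' : ℚ → ℕ} (h : ∀ a ∈ s, e a = e' a) :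
    residueSum s e = residueSum s e' := by
  refine LinearMap.ext fun p => ?_
  rw [residueSum_apply, residueSum_apply]
  refine Finset.sum_congr rfl fun r hr => ?_
  rw [h r hr, awayFactor, awayFactor,
    Finset.prod_congr rfl fun a ha => by rw [h a (Finset.mem_of_mem_erase ha)]]

theorem inv_one_series : (1 : PowerSeries ℚ)⁻¹ = 1 := by
  rw [PowerSeries.inv_eq_iff_mul_eq_one (by simp), one_mul]

theorem residueSum_single_one {s : Finset ℚ} {a : ℚ} (ha : a ∈ s) (p : Polynomial ℚ) :
    residueSum s (Pi.single a 1) p = p.eval a := by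
  rw [residueSum_apply, Finset.sum_eq_single a]
  · have haway : awayFactor s (Pi.single a 1) a = 1 :=
      Finset.prod_eq_one fun b hb => by
        rw [Pi.single_eq_of_ne (Finset.ne_of_mem_erase hb), pow_zero]
    rw [haway, inv_one_series, mul_one, Pi.single_eq_same, ← zero_add 1,
      PowerSeries.coeff_succ_X_mul, PowerSeries.coeff_zero_eq_constantCoeff_apply,
      constantCoeff_taylorSeries]
  · intro b _ hb
    rw [Pi.single_eq_of_ne hb, PowerSeries.coeff_zero_X_mul]
  · exact fun h => (h ha).elim

theorem exists_mem_ne_zero_of_sum {s : Finset ℚ} {e : ℚ → ℕ} {m : ℕ}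
    (he : ∑ a ∈ s, e a = m + 1) : ∃ a ∈ s, e a ≠ 0 :=
  Finset.exists_ne_zero_of_sum_ne_zero (by omega)

theorem eq_add_single {e : ℚ → ℕ} {a : ℚ} (ha : e a ≠ 0) :
    e = (e - Pi.single a 1) + Pi.single a 1 := by
  funext b
  rcases eq_or_ne b a with rfl | h
  · simp
    omega
  · simp [h]

theorem sum_sub_single {s : Finset ℚ} {e : ℚ → ℕ} {a : ℚ} (hs : a ∈ s) (ha : e a ≠ 0) {m : ℕ}
    (he : ∑ b ∈ s, e b = m + 1) : ∑ b ∈ s, (e - Pi.single a 1 : ℚ → ℕ) b = m := by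
  have h := congrArg (fun f : ℚ → ℕ => ∑ b ∈ s, f b) (eq_add_single ha)
  simp only [Pi.add_apply, Finset.sum_add_distrib, Finset.sum_pi_single', hs, if_true] at h
  omega

theorem residueSum_one_eq_one {s : Finset ℚ} {e : ℚ → ℕ} (he : ∑ a ∈ s, e a = 1) :
    residueSum s e 1 = 1 := by
  obtain ⟨a, hs, ha⟩ := exists_mem_ne_zero_of_sum he
  have hz := Finset.sum_eq_zero_iff.mp (sum_sub_single hs ha he)
  rw [residueSum_congr (e' := Pi.single a 1) fun b hb => by
    rw [eq_add_single ha, Pi.add_apply, hz b hb, zero_add], residueSum_single_one hs,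
    Polynomial.eval_one]

theorem residueSum_one_eq_zero {s : Finset ℚ} {m : ℕ} {e : ℚ → ℕ} (he : ∑ a ∈ s, e a = m + 2) :
    residueSum s e 1 = 0 := by
  induction m generalizing e with
  | zero | succ m ih =>
    obtain ⟨a, has, ha⟩ := exists_mem_ne_zero_of_sum he
    by_cases hb : ∀ b ∈ s, b ≠ a → e b = 0
    · rw [residueSum_apply, Finset.sum_eq_single a]
      · rw [Finset.sum_eq_single a hb (fun h => (h has).elim)] at he
        have haway : awayFactor s e a = 1 := Finset.prod_eq_one fun b hbs => by
          rw [hb b (Finset.mem_of_mem_erase hbs) (Finset.ne_of_mem_erase hbs), pow_zero]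
        rw [haway, inv_one_series, RingHom.map_one, mul_one, mul_one, he, PowerSeries.coeff_X,
          if_neg (by omega)]
      · intro b hbs hba
        rw [hb b hbs hba, PowerSeries.coeff_zero_X_mul]
      · exact fun h => (h has).elim
    · push Not at hb
      obtain ⟨b, hbs, hba, hb⟩ := hb
      have hsa := sum_sub_single has ha he
      have hsb := sum_sub_single hbs hb he
      have hra := residueSum_X_sub_C_mul has (e - Pi.single a 1) 1
      have hrb := residueSum_X_sub_C_mul hbs (e - Pi.single b 1) 1
      rw [← eq_add_single ha, mul_one] at hra
      rw [← eq_add_single hb, mul_one] at hrb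
      have hdiff : residueSum s e (Polynomial.X - Polynomial.C a) =
          residueSum s e (Polynomial.X - Polynomial.C b) := by
        rw [hra, hrb]
        first
        | rw [ih hsa, ih hsb]
        | rw [residueSum_one_eq_one hsa, residueSum_one_eq_one hsb]
      rw [← sub_eq_zero, ← map_sub, sub_sub_sub_cancel_left, ← map_sub,
        ← mul_one (Polynomial.C _), ← Polynomial.smul_eq_C_mul, map_smul, smul_eq_mul] at hdiff
      exact (mul_eq_zero.mp hdiff).resolve_left (sub_ne_zero.mpr hba)

theorem residueSum_eq_zero {s : Finset ℚ} {m : ℕ} {e : ℚ → ℕ} (he : ∑ a ∈ s, e a = m + 2)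
    {p : Polynomial ℚ} (hp : p.natDegree ≤ m) : residueSum s e p = 0 := by
  have hconst (c : ℚ) {m : ℕ} {e : ℚ → ℕ} (he : ∑ a ∈ s, e a = m + 2) :
      residueSum s e (Polynomial.C c) = 0 := by
    rw [← mul_one (Polynomial.C c), ← Polynomial.smul_eq_C_mul, map_smul,
      residueSum_one_eq_zero he, smul_zero]
  induction m generalizing e p with
  | zero => rw [Polynomial.eq_C_of_natDegree_le_zero hp, hconst _ he]
  | succ m ih =>
    obtain ⟨a, hs, ha⟩ := exists_mem_ne_zero_of_sum he
    rw [← Polynomial.modByMonic_add_div p (Polynomial.X - Polynomial.C a),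
      Polynomial.modByMonic_X_sub_C_eq_C_eval, map_add, hconst _ he, zero_add, eq_add_single ha,
      residueSum_X_sub_C_mul hs]
    refine ih (sum_sub_single hs ha he) ?_
    rw [Polynomial.natDegree_divByMonic _ (Polynomial.monic_X_sub_C a),
      Polynomial.natDegree_X_sub_C]
    omega

end Residue

/-! ### The residue pairing -/

/-- The factor `∏_{a ≤ n - d} (a - y) / ∏_{a ≤ d} (a + y) ^ 8`. -/
def primalFactor (n d : ℕ) : PowerSeries ℚ :=
  (∏ a ∈ Finset.range (n - d), (((a + 1 : ℕ) : PowerSeries ℚ) - PowerSeries.X)) *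
    (∏ a ∈ Finset.range d, (((a + 1 : ℕ) : PowerSeries ℚ) + PowerSeries.X) ^ 8)⁻¹

/-- The factor `(-1) ^ (m + 1) / (m ! (n + 1 + m) ! ^ 8)`. -/
def farPrimalFactor (n m : ℕ) : ℚ :=
  (-1) ^ (m + 1) / ((m.factorial : ℚ) * ((n + 1 + m).factorial : ℚ) ^ 8)

theorem prod_range_erase {M : Type} [CommMonoid M] (f : ℕ → M) (d k : ℕ) :
    ∏ a ∈ (Finset.range (d + k + 1)).erase d, f a =
      (∏ a ∈ Finset.range d, f (d - 1 - a)) * ∏ a ∈ Finset.range k, f (d + 1 + a) := by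
  rw [Finset.prod_range_reflect]
  induction k with
  | zero =>
    rw [Finset.range_zero, Finset.prod_empty, mul_one, add_zero, Finset.range_add_one,
      Finset.erase_insert Finset.notMem_range_self]
  | succ k ih =>
    rw [Finset.range_add_one, Finset.erase_insert_of_ne (by omega), Finset.prod_insert (by simp),
      ← add_assoc, ih, Finset.prod_range_succ, mul_comm, mul_assoc, add_right_comm d k 1]

theorem constantCoeff_natCast_add_X (a : ℕ) :
    PowerSeries.constantCoeff (((a + 1 : ℕ) : PowerSeries ℚ) + PowerSeries.X) ≠ 0 := by
  rw [map_add, map_natCast, PowerSeries.constantCoeff_X, add_zero]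
  exact Nat.cast_ne_zero.mpr a.succ_ne_zero

/-- The near poles `0, …, m`. -/
def nearPoles (m : ℕ) : Finset ℚ := (Finset.range (m + 1)).image fun a : ℕ => (a : ℚ)

/-- The far poles `n + 1, …, n + 1 + m`. -/
def farPoles (n m : ℕ) : Finset ℚ := (Finset.range (m + 1)).image fun a : ℕ => (n : ℚ) + 1 + a

/-- The multiplicities of the poles. -/
def poleOrder (m : ℕ) (x : ℚ) : ℕ := if x ≤ m then 8 else 1

theorem far_injective (n : ℕ) : Function.Injective fun a : ℕ => (n : ℚ) + 1 + a :=
  (add_right_injective _).comp Nat.cast_injective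

theorem poleOrder_near {m a : ℕ} (h : a ≤ m) : poleOrder m a = 8 :=
  if_pos (Nat.cast_le.mpr h)

theorem poleOrder_far {n m : ℕ} (h : m ≤ n) (a : ℕ) : poleOrder m (n + 1 + a) = 1 :=
  if_neg (by
    have : (m : ℚ) ≤ n := Nat.cast_le.mpr h
    have : (0 : ℚ) ≤ a := Nat.cast_nonneg a
    linarith)

theorem disjoint_nearPoles_farPoles {n m : ℕ} (h : m ≤ n) :
    Disjoint (nearPoles m) (farPoles n m) := by
  rw [Finset.disjoint_left]
  intro x hx hx'
  obtain ⟨a, ha, rfl⟩ := Finset.mem_image.mp hx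
  obtain ⟨b, hb, h'⟩ := Finset.mem_image.mp hx'
  have : n + 1 + b = a := by exact_mod_cast h'
  rw [Finset.mem_range] at ha
  omega

theorem sum_nearPoles {M : Type} [AddCommMonoid M] (f : ℚ → M) (m : ℕ) :
    ∑ r ∈ nearPoles m, f r = ∑ a ∈ Finset.range (m + 1), f a :=
  Finset.sum_image Nat.cast_injective.injOn

theorem sum_farPoles {M : Type} [AddCommMonoid M] (f : ℚ → M) (n m : ℕ) :
    ∑ r ∈ farPoles n m, f r = ∑ a ∈ Finset.range (m + 1), f (n + 1 + a) :=
  Finset.sum_image (far_injective n).injOn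

theorem awayFactor_near {n d k : ℕ} (h : d + k ≤ n) :
    awayFactor (nearPoles (d + k) ∪ farPoles n (d + k)) (poleOrder (d + k)) d =
      (∏ a ∈ Finset.range d, (((a + 1 : ℕ) : PowerSeries ℚ) + PowerSeries.X) ^ 8) *
        (∏ a ∈ Finset.range k, (((a + 1 : ℕ) : PowerSeries ℚ) - PowerSeries.X) ^ 8) *
        ((-1) ^ (d + k + 1) * ∏ a ∈ Finset.range (d + k + 1),
          (((n - d + a + 1 : ℕ) : PowerSeries ℚ) - PowerSeries.X)) := by
  have hdisj := disjoint_nearPoles_farPoles h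
  have hd : (d : ℚ) ∈ nearPoles (d + k) :=
    Finset.mem_image.mpr ⟨d, Finset.mem_range.mpr (by omega), rfl⟩
  rw [awayFactor, Finset.erase_union_distrib,
    Finset.erase_eq_of_notMem (Finset.disjoint_left.mp hdisj hd),
    Finset.prod_union (hdisj.mono_left (Finset.erase_subset _ _)), nearPoles, farPoles,
    ← Finset.image_erase Nat.cast_injective, Finset.prod_image Nat.cast_injective.injOn,
    Finset.prod_image (far_injective n).injOn, prod_range_erase]
  have hsign : (-1 : PowerSeries ℚ) ^ (d + k + 1) = ∏ _a ∈ Finset.range (d + k + 1), (-1) := by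
    rw [Finset.prod_const, Finset.card_range]
  rw [hsign, ← Finset.prod_mul_distrib]
  congr 1
  · congr 1
    · refine Finset.prod_congr rfl fun a ha => ?_
      rw [Finset.mem_range] at ha
      obtain ⟨b, rfl⟩ := Nat.exists_eq_add_of_lt ha
      rw [poleOrder_near (by omega), show a + b + 1 - 1 - a = b by omega, map_sub, map_natCast,
        map_natCast]
      push_cast
      ring
    · refine Finset.prod_congr rfl fun a ha => ?_
      rw [Finset.mem_range] at ha
      rw [poleOrder_near (by omega), map_sub, map_natCast, map_natCast]
      push_cast
      ring
  · refine Finset.prod_congr rfl fun a _ => ?_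
    obtain ⟨b, rfl⟩ := Nat.exists_eq_add_of_le (show d ≤ n by omega)
    rw [poleOrder_far h, show d + b - d = b by omega]
    simp only [map_sub, map_add, map_natCast, map_one]
    push_cast
    ring

theorem inv_awayFactor_near {n d k : ℕ} (h : d + k ≤ n) :
    (awayFactor (nearPoles (d + k) ∪ farPoles n (d + k)) (poleOrder (d + k)) d)⁻¹ =
      (-1) ^ (d + k + 1) * (primalFactor n d * localFactor n k) := by
  have hne (f : ℕ → ℕ) (k m : ℕ) : PowerSeries.constantCoeff (∏ a ∈ Finset.range k,
      (((f a + 1 : ℕ) : PowerSeries ℚ) - PowerSeries.X) ^ m) ≠ 0 := by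
    rw [map_prod]
    exact Finset.prod_ne_zero_iff.mpr fun a _ => by
      rw [map_pow]
      exact pow_ne_zero _ (constantCoeff_natCast_sub_X _)
  have hne' (k m : ℕ) : PowerSeries.constantCoeff (∏ a ∈ Finset.range k,
      (((a + 1 : ℕ) : PowerSeries ℚ) + PowerSeries.X) ^ m) ≠ 0 := by
    rw [map_prod]
    exact Finset.prod_ne_zero_iff.mpr fun a _ => by
      rw [map_pow]
      exact pow_ne_zero _ (constantCoeff_natCast_add_X _)
  have hsplit : ∏ a ∈ Finset.range (n + 1 + k), (((a + 1 : ℕ) : PowerSeries ℚ) - PowerSeries.X) =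
      (∏ a ∈ Finset.range (n - d), (((a + 1 : ℕ) : PowerSeries ℚ) - PowerSeries.X)) *
        ∏ a ∈ Finset.range (d + k + 1),
          (((n - d + a + 1 : ℕ) : PowerSeries ℚ) - PowerSeries.X) := by
    rw [← Finset.prod_range_add, show n - d + (d + k + 1) = n + 1 + k by omega]
  have h₁ := PowerSeries.mul_inv_cancel _ (hne' d 8)
  have h₂ : ((∏ a ∈ Finset.range k, (((a + 1 : ℕ) : PowerSeries ℚ) - PowerSeries.X) ^ 8) *
      ∏ a ∈ Finset.range (n + 1 + k), (((a + 1 : ℕ) : PowerSeries ℚ) - PowerSeries.X)) *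
      localFactor n k = 1 := by
    refine PowerSeries.mul_inv_cancel _ ?_
    rw [map_mul]
    exact mul_ne_zero (hne id k 8) (by simpa only [pow_one, id_eq] using hne id (n + 1 + k) 1)
  have hsq : (-1 : PowerSeries ℚ) ^ (d + k + 1) * (-1) ^ (d + k + 1) = 1 := by
    rw [← mul_pow, neg_one_mul, neg_neg, one_pow]
  rw [hsplit] at h₂
  have haway := awayFactor_near h
  rw [PowerSeries.inv_eq_iff_mul_eq_one, haway, primalFactor]
  · generalize (-1 : PowerSeries ℚ) ^ (d + k + 1) = σ at *
    generalize (∏ a ∈ Finset.range d, (((a + 1 : ℕ) : PowerSeries ℚ) + PowerSeries.X) ^ 8)⁻¹ = P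
      at *
    refine Eq.trans ?_ ((congrArg₂ (· * ·) (congrArg₂ (· * ·) hsq h₁) h₂).trans (by ring))
    ring
  · rw [haway]
    simp only [map_mul, map_pow, map_neg, map_one]
    refine mul_ne_zero (mul_ne_zero (hne' d 8) (hne id k 8)) (mul_ne_zero (by simp) ?_)
    simpa only [pow_one] using hne (fun a => n - d + a) (d + k + 1) 1

theorem prod_range_natCast_sub_mul_factorial (n k : ℕ) :
    (∏ c ∈ Finset.range k, (((n + k : ℕ) : ℚ) - c)) * (n.factorial : ℚ) = (n + k).factorial := by
  induction k with
  | zero => simp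
  | succ k ih =>
    rw [Finset.prod_range_succ', ← add_assoc, Nat.factorial_succ, Nat.cast_mul, ← ih]
    push_cast
    simp only [add_sub_add_right_eq_sub, sub_zero]
    ring

theorem prod_range_sub_mul_factorial {n a b : ℕ} (h : a + b ≤ n) :
    (∏ c ∈ Finset.range (a + b + 1), ((n : ℚ) + 1 + a - c)) * ((n - b).factorial : ℚ) =
      (n + 1 + a).factorial := by
  have h' := prod_range_natCast_sub_mul_factorial (n - b) (a + b + 1)
  rw [show n - b + (a + b + 1) = n + 1 + a by omega] at h'
  rw [← h']
  push_cast
  rfl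

theorem constantCoeff_awayFactor_far {n a b : ℕ} (h : a + b ≤ n) :
    PowerSeries.constantCoeff
      (awayFactor (nearPoles (a + b) ∪ farPoles n (a + b)) (poleOrder (a + b)) (n + 1 + a)) =
      (∏ c ∈ Finset.range (a + b + 1), ((n : ℚ) + 1 + a - c)) ^ 8 *
        ((-1) ^ b * a.factorial * b.factorial) := by
  have hdisj := disjoint_nearPoles_farPoles h
  have ha : (n : ℚ) + 1 + a ∈ farPoles n (a + b) :=
    Finset.mem_image.mpr ⟨a, Finset.mem_range.mpr (by omega), rfl⟩
  rw [awayFactor, Finset.erase_union_distrib,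
    Finset.erase_eq_of_notMem (Finset.disjoint_right.mp hdisj ha),
    Finset.prod_union (hdisj.mono_right (Finset.erase_subset _ _)), nearPoles, farPoles,
    ← Finset.image_erase (far_injective n) _ a, Finset.prod_image Nat.cast_injective.injOn,
    Finset.prod_image (far_injective n).injOn, prod_range_erase]
  simp only [map_mul, map_prod, map_pow, map_add, PowerSeries.constantCoeff_X, zero_add,
    PowerSeries.constantCoeff_C, poleOrder_far h, pow_one]
  congr 1
  · rw [← Finset.prod_pow]
    refine Finset.prod_congr rfl fun c hc => ?_
    rw [poleOrder_near (by rw [Finset.mem_range] at hc; omega)]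
  · rw [mul_comm ((-1) ^ b) _, mul_assoc]
    congr 1
    · rw [← Finset.prod_range_add_one_eq_factorial, Nat.cast_prod]
      refine Finset.prod_congr rfl fun c hc => ?_
      rw [Finset.mem_range] at hc
      obtain ⟨b, rfl⟩ := Nat.exists_eq_add_of_lt hc
      rw [show c + b + 1 - 1 - c = b by omega]
      push_cast
      ring
    · have hsign : (-1 : ℚ) ^ b = ∏ _a ∈ Finset.range b, (-1) := by
        rw [Finset.prod_const, Finset.card_range]
      rw [← Finset.prod_range_add_one_eq_factorial, Nat.cast_prod, hsign,
        ← Finset.prod_mul_distrib]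
      refine Finset.prod_congr rfl fun c hc => ?_
      push_cast
      ring

theorem inv_constantCoeff_awayFactor_far {n a b : ℕ} (h : a + b ≤ n) :
    (PowerSeries.constantCoeff
      (awayFactor (nearPoles (a + b) ∪ farPoles n (a + b)) (poleOrder (a + b)) (n + 1 + a)))⁻¹ =
      (-1) ^ (a + b + 1) * (farPrimalFactor n a * farFactor n (n - b)) := by
  have h₁ : ((n - b).factorial : ℚ) ≠ 0 := by positivity
  have h₂ : ((n + 1 + a).factorial : ℚ) ≠ 0 := by positivity
  have h₃ : (a.factorial : ℚ) ≠ 0 := by positivity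
  have h₄ : (b.factorial : ℚ) ≠ 0 := by positivity
  have hprod := eq_div_of_mul_eq h₁ (prod_range_sub_mul_factorial h)
  rw [constantCoeff_awayFactor_far h, hprod, farPrimalFactor, farFactor, if_pos (by omega),
    show n - (n - b) = b by omega]
  have hs : ((-1 : ℚ) ^ b)⁻¹ = (-1) ^ b := by rw [← inv_pow, inv_neg, inv_one]
  have hs' : (-1 : ℚ) ^ (a + b + 1) * (-1) ^ (a + 1) = (-1) ^ b := by
    rw [← pow_add, show a + b + 1 + (a + 1) = 2 * (a + 1) + b by ring, pow_add, pow_mul]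
    norm_num
  rw [mul_inv, mul_inv, mul_inv, hs, ← hs']
  field_simp

/-- The pairing of the near and far expansions of `p` is a sum of residues. -/
theorem sum_antidiagonal_eq_residueSum {n m : ℕ} (h : m ≤ n) (p : Polynomial ℚ) :
    (∑ x ∈ Finset.HasAntidiagonal.antidiagonal m,
      PowerSeries.coeff 7 (taylorSeries x.1 p * (primalFactor n x.1 * localFactor n x.2))) +
    ∑ x ∈ Finset.HasAntidiagonal.antidiagonal m,
      p.eval ((n : ℚ) + 1 + x.1) * (farPrimalFactor n x.1 * farFactor n (n - x.2)) =
    (-1) ^ (m + 1) * residueSum (nearPoles m ∪ farPoles n m) (poleOrder m) p := by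
  have hsq : (-1 : ℚ) ^ (m + 1) * (-1) ^ (m + 1) = 1 := by
    rw [← mul_pow, neg_one_mul, neg_neg, one_pow]
  rw [residueSum_apply, Finset.sum_union (disjoint_nearPoles_farPoles h), mul_add, Finset.mul_sum,
    Finset.mul_sum]
  rw [sum_nearPoles, sum_farPoles,
    Finset.Nat.sum_antidiagonal_eq_sum_range_succ_mk,
    Finset.Nat.sum_antidiagonal_eq_sum_range_succ_mk]
  congr 1
  · refine Finset.sum_congr rfl fun d hd => ?_
    obtain ⟨k, rfl⟩ := Nat.exists_eq_add_of_le (Nat.le_of_lt_succ (Finset.mem_range.mp hd))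
    rw [poleOrder_near (by omega), PowerSeries.coeff_succ_X_mul, inv_awayFactor_near h,
      mul_left_comm (taylorSeries _ _) (_ ^ _), show d + k - d = k by omega,
      show (-1 : PowerSeries ℚ) ^ (d + k + 1) = PowerSeries.C ((-1) ^ (d + k + 1)) by simp,
      PowerSeries.coeff_C_mul, ← mul_assoc ((-1 : ℚ) ^ _), hsq, one_mul]
  · refine Finset.sum_congr rfl fun d hd => ?_
    obtain ⟨k, rfl⟩ := Nat.exists_eq_add_of_le (Nat.le_of_lt_succ (Finset.mem_range.mp hd))
    rw [poleOrder_far h, ← zero_add 1, PowerSeries.coeff_succ_X_mul,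
      PowerSeries.coeff_zero_eq_constantCoeff_apply, map_mul, PowerSeries.constantCoeff_inv,
      zero_add, inv_constantCoeff_awayFactor_far h, constantCoeff_taylorSeries,
      show d + k - d = k by omega]
    linear_combination (-p.eval ((n : ℚ) + 1 + d) * (farPrimalFactor n d * farFactor n (n - k))) *
      hsq

theorem sum_poleOrder {n m : ℕ} (h : m ≤ n) :
    ∑ a ∈ nearPoles m ∪ farPoles n m, poleOrder m a = 9 * (m + 1) := by
  rw [Finset.sum_union (disjoint_nearPoles_farPoles h), sum_nearPoles, sum_farPoles,
    Finset.sum_congr rfl fun a ha => poleOrder_near (Nat.le_of_lt_succ (Finset.mem_range.mp ha)),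
    Finset.sum_congr rfl fun a _ => poleOrder_far h a]
  simp
  ring

theorem residueSum_X_sub_C_pow_mul {s : Finset ℚ} {a : ℚ} (ha : a ∈ s) (e : ℚ → ℕ) (k : ℕ)
    (p : Polynomial ℚ) :
    residueSum s (e + Pi.single a k) ((Polynomial.X - Polynomial.C a) ^ k * p) =
      residueSum s e p := by
  induction k generalizing p with
  | zero => rw [Pi.single_zero, add_zero, pow_zero, one_mul]
  | succ k ih =>
    rw [Pi.single_add, ← add_assoc, pow_succ', mul_assoc, residueSum_X_sub_C_mul ha, ih]

theorem residueSum_X_pow_eight_mul (n : ℕ) (p : Polynomial ℚ) :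
    residueSum (nearPoles 0 ∪ farPoles n 0) (poleOrder 0) (Polynomial.X ^ 8 * p) =
      p.eval ((n : ℚ) + 1) := by
  have hmem : (n : ℚ) + 1 ∈ nearPoles 0 ∪ farPoles n 0 := by simp [farPoles]
  have hne : (n : ℚ) + 1 ≠ 0 := by positivity
  have h := residueSum_X_sub_C_pow_mul (show (0 : ℚ) ∈ nearPoles 0 ∪ farPoles n 0 by
    simp [nearPoles]) (Pi.single ((n : ℚ) + 1) 1) 8 p
  rw [map_zero, sub_zero, residueSum_single_one hmem] at h
  rw [← h, residueSum_congr]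
  intro a ha
  obtain rfl | rfl : a = 0 ∨ a = n + 1 := by simpa [nearPoles, farPoles] using ha
  · simp [poleOrder, hne.symm]
  · have : ¬ (n : ℚ) + 1 ≤ 0 := not_le.mpr (by positivity)
    simp [poleOrder, this, hne]

/-- The coefficient of `t ^ m` of the residue pairing of `z ^ k` with `(z - m) ^ c`. -/
theorem sum_antidiagonal_pairing {n m : ℕ} (h : m ≤ n) (k c : ℕ) (hkc : k + c ≤ 10) :
    (∑ x ∈ Finset.HasAntidiagonal.antidiagonal m,
      PowerSeries.coeff 7 (((PowerSeries.X + (x.1 : PowerSeries ℚ)) ^ k * primalFactor n x.1) *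
        (localFactor n x.2 * (PowerSeries.X - (x.2 : PowerSeries ℚ)) ^ c))) +
    ∑ x ∈ Finset.HasAntidiagonal.antidiagonal m,
      (farPrimalFactor n x.1 * ((n : ℚ) + 1 + x.1) ^ k) *
        (farFactor n (n - x.2) * ((n : ℚ) + 1 - x.2) ^ c) =
    if m = 0 ∧ 8 ≤ k + c then -((n : ℚ) + 1) ^ (k + c - 8) else 0 := by
  have hres := sum_antidiagonal_eq_residueSum h
    (Polynomial.X ^ k * (Polynomial.X - Polynomial.C (m : ℚ)) ^ c)
  refine Eq.trans (congrArg₂ (· + ·) (Finset.sum_congr rfl fun x hx => ?_)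
    (Finset.sum_congr rfl fun x hx => ?_)) (hres.trans ?_)
  · rw [RingHom.map_mul, RingHom.map_pow, RingHom.map_pow, taylorSeries_X_sub_C,
      ← Finset.HasAntidiagonal.mem_antidiagonal.mp hx]
    have hX : taylorSeries x.1 Polynomial.X = PowerSeries.X + (x.1 : PowerSeries ℚ) := by
      simp [taylorSeries]
    have hm : PowerSeries.X + PowerSeries.C ((x.1 : ℚ) - (x.1 + x.2 : ℕ)) =
        PowerSeries.X - (x.2 : PowerSeries ℚ) := by
      simp
      ring
    rw [hX, hm]
    congr 1
    ring
  · rw [← Finset.HasAntidiagonal.mem_antidiagonal.mp hx]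
    simp
    ring
  · split_ifs with hm
    · obtain ⟨rfl, hkc⟩ := hm
      obtain ⟨j, hj⟩ := Nat.exists_eq_add_of_le hkc
      rw [Nat.cast_zero, map_zero, sub_zero, ← pow_add, hj, pow_add Polynomial.X,
        residueSum_X_pow_eight_mul,
        show 8 + j - 8 = j by omega]
      simp
    · rw [residueSum_eq_zero (m := 9 * m + 7) (by rw [sum_poleOrder h]; ring), mul_zero]
      refine (Polynomial.natDegree_mul_le.trans (Nat.add_le_add
        (Polynomial.natDegree_X_pow_le k) (Polynomial.natDegree_pow_le.trans
          (Nat.mul_le_mul_left c (Polynomial.natDegree_X_sub_C_le _))))).trans ?_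
      omega

/-! ### The duality of determinants -/

/-- The ring of power series truncated after degree `n`. -/
abbrev TruncRing (n : ℕ) : Type :=
  PowerSeries ℚ ⧸ Ideal.span {(PowerSeries.X : PowerSeries ℚ) ^ (n + 1)}

/-- The truncation homomorphism. -/
abbrev truncMap (n : ℕ) : PowerSeries ℚ →+* TruncRing n := Ideal.Quotient.mk _

theorem truncMap_eq_iff {n : ℕ} {f g : PowerSeries ℚ} :
    truncMap n f = truncMap n g ↔
      ∀ m ≤ n, PowerSeries.coeff m f = PowerSeries.coeff m g := by
  rw [Ideal.Quotient.eq, Ideal.mem_span_singleton, PowerSeries.X_pow_dvd_iff]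
  simp only [map_sub, sub_eq_zero, Nat.lt_succ_iff]

theorem th_mul (f g : PowerSeries ℚ) : th (f * g) = th f * g + f * th g := by
  ext m
  rw [coeff_th, map_add, PowerSeries.coeff_mul, PowerSeries.coeff_mul, PowerSeries.coeff_mul,
    Finset.mul_sum, ← Finset.sum_add_distrib]
  refine Finset.sum_congr rfl fun x hx => ?_
  rw [coeff_th, coeff_th, ← Finset.HasAntidiagonal.mem_antidiagonal.mp hx]
  push_cast
  ring

/-- The homomorphism `f ↦ f + ε θ f` into dual numbers over truncated power series. -/
def eulerDual (n : ℕ) : PowerSeries ℚ →+* DualNumber (TruncRing n) where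
  toFun f := TrivSqZeroExt.inl (truncMap n f) + TrivSqZeroExt.inr (truncMap n (th f))
  map_one' := by
    have h : th 1 = 0 := by
      ext m
      rw [coeff_th, PowerSeries.coeff_one]
      split_ifs with hm <;> simp [hm]
    ext <;> simp [h]
  map_zero' := by
    have h : th 0 = 0 := by
      ext m
      simp [coeff_th]
    ext <;> simp [h]
  map_add' f g := by
    have h : th (f + g) = th f + th g := by
      ext m
      simp only [coeff_th, map_add, mul_add]
    ext <;> simp [h]
  map_mul' f g := by
    ext
    · simp
    · simp [th_mul]
      ring

theorem det_one_add_smul_eps {K ι : Type} [CommRing K] [Fintype ι] [DecidableEq ι]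
    (M : Matrix ι ι (DualNumber K)) :
    (1 + (DualNumber.eps : DualNumber K) • M).det = 1 + M.trace * DualNumber.eps := by
  rw [Matrix.det_one_add_smul, pow_two, DualNumber.eps_mul_eps, mul_zero, add_zero]

theorem one_add_smul_mul_mul_one_sub_smul {K ι : Type} [CommRing K] [Fintype ι] [DecidableEq ι]
    {e : K} (he : e * e = 0) (C M N : Matrix ι ι K) :
    (1 + e • C) * M * (1 + e • (-N)) = M + e • (C * M - M * N) := by
  rw [add_mul, one_mul, mul_add, mul_one, add_mul]
  simp only [Matrix.mul_smul, Matrix.smul_mul, mul_neg, smul_smul, he, zero_smul, smul_sub,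
    smul_neg, neg_zero, add_zero]
  abel

/-- If the infinitesimal part of a matrix is `C M - M N` with `M` the finite part and
`tr C = tr N`, then the determinant has no infinitesimal part. -/
theorem snd_det_eq_zero {K ι : Type} [CommRing K] [Fintype ι] [DecidableEq ι]
    {A : Matrix ι ι (DualNumber K)} {C N : Matrix ι ι K}
    (hA : A.map TrivSqZeroExt.snd = C * A.map TrivSqZeroExt.fst - A.map TrivSqZeroExt.fst * N)
    (htr : C.trace = N.trace) : A.det.snd = 0 := by
  let i : K →+* DualNumber K := TrivSqZeroExt.inlHom K K
  let e : DualNumber K := DualNumber.eps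
  have he : e * e = 0 := DualNumber.eps_mul_eps
  have hmap : A = (1 + e • i.mapMatrix C) * i.mapMatrix (A.map TrivSqZeroExt.fst) *
      (1 + e • (- i.mapMatrix N)) := by
    rw [one_add_smul_mul_mul_one_sub_smul he, ← map_mul, ← map_mul, ← map_sub, ← hA]
    ext k l <;> simp [e, i]
  have hdet := congrArg Matrix.det hmap
  rw [Matrix.det_mul, Matrix.det_mul, det_one_add_smul_eps, det_one_add_smul_eps,
    Matrix.trace_neg, ← RingHom.map_det] at hdet
  have htr' : (i.mapMatrix C).trace = (i.mapMatrix N).trace := by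
    have h (M : Matrix ι ι K) : (i.mapMatrix M).trace = i M.trace := by
      simp [Matrix.trace]
    rw [h, h, htr]
  have hdet' : A.det = i (A.map TrivSqZeroExt.fst).det := by
    rw [hdet, htr']
    linear_combination (-(i.mapMatrix N).trace * (i.mapMatrix N).trace *
      i (A.map TrivSqZeroExt.fst).det) * he
  rw [hdet']
  rfl

/-- A solution of `θ A = C A - A N` with `tr C = tr N` has constant determinant. -/
theorem truncMap_th_det_eq_zero {ι : Type} [Fintype ι] [DecidableEq ι] {n : ℕ}
    {A : Matrix ι ι (PowerSeries ℚ)} {C N : Matrix ι ι (TruncRing n)}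
    (hA : A.map (fun f => truncMap n (th f)) = C * A.map (truncMap n) - A.map (truncMap n) * N)
    (htr : C.trace = N.trace) : truncMap n (th A.det) = 0 := by
  have hfst : ((eulerDual n).mapMatrix A).map TrivSqZeroExt.fst = A.map (truncMap n) := by
    ext k l
    simp [eulerDual]
  have hsnd : ((eulerDual n).mapMatrix A).map TrivSqZeroExt.snd =
      A.map (fun f => truncMap n (th f)) := by
    ext k l
    simp [eulerDual]
  have h := snd_det_eq_zero (A := (eulerDual n).mapMatrix A) (C := C) (N := N)
    (by rw [hfst, hsnd, hA]) htr
  rw [← RingHom.map_det] at h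
  simpa [eulerDual] using h

/-- The generating series of the Taylor coefficients of the primal factors. -/
def primalSeries (n k l : ℕ) : PowerSeries ℚ :=
  PowerSeries.mk fun d =>
    if l < 8 then
      PowerSeries.coeff l ((PowerSeries.X + (d : PowerSeries ℚ)) ^ k * primalFactor n d)
    else farPrimalFactor n d * ((n : ℚ) + 1 + d) ^ k

theorem coeff_primalSeries_near (n k d : ℕ) {l : ℕ} (hl : l < 8) :
    PowerSeries.coeff d (primalSeries n k l) =
      PowerSeries.coeff l ((PowerSeries.X + (d : PowerSeries ℚ)) ^ k * primalFactor n d) := by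
  rw [primalSeries, PowerSeries.coeff_mk, if_pos hl]

theorem coeff_primalSeries_far (n k d : ℕ) :
    PowerSeries.coeff d (primalSeries n k 8) = farPrimalFactor n d * ((n : ℚ) + 1 + d) ^ k := by
  rw [primalSeries, PowerSeries.coeff_mk, if_neg (lt_irrefl 8)]

theorem natCast_add_X_pow_mul_primalFactor_succ {n d : ℕ} (h : d < n) :
    (PowerSeries.X + ((d + 1 : ℕ) : PowerSeries ℚ)) ^ 8 *
      (PowerSeries.X + ((d + 1 : ℕ) : PowerSeries ℚ) - ((n + 1 : ℕ) : PowerSeries ℚ)) *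
        primalFactor n (d + 1) =
      -primalFactor n d := by
  obtain ⟨c, rfl⟩ := Nat.exists_eq_add_of_lt h
  have hinv : (((d + 1 : ℕ) : PowerSeries ℚ) + PowerSeries.X) ^ 8 *
      (∏ a ∈ Finset.range (d + 1), (((a + 1 : ℕ) : PowerSeries ℚ) + PowerSeries.X) ^ 8)⁻¹ =
      (∏ a ∈ Finset.range d, (((a + 1 : ℕ) : PowerSeries ℚ) + PowerSeries.X) ^ 8)⁻¹ := by
    rw [Finset.prod_range_succ]
    refine inv_mul_mul_cancel ?_
    rw [map_pow]
    exact pow_ne_zero _ (constantCoeff_natCast_add_X d)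
  rw [primalFactor, primalFactor, ← hinv, show d + c + 1 - (d + 1) = c by omega,
    show d + c + 1 - d = c + 1 by omega]
  generalize (∏ a ∈ Finset.range (d + 1), (((a + 1 : ℕ) : PowerSeries ℚ) + PowerSeries.X) ^ 8)⁻¹ = u
  rw [Finset.prod_range_succ]
  push_cast
  ring

theorem th_primalSeries_zero (n k : ℕ) : th (primalSeries n k 0) = primalSeries n (k + 1) 0 := by
  ext d
  rw [coeff_th, coeff_primalSeries_near _ _ _ (by norm_num),
    coeff_primalSeries_near _ _ _ (by norm_num), pow_succ', mul_assoc]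
  simp

theorem th_primalSeries_near (n k : ℕ) {l : ℕ} (hl : l + 1 < 8) :
    th (primalSeries n k (l + 1)) = primalSeries n (k + 1) (l + 1) - primalSeries n k l := by
  ext d
  rw [map_sub, coeff_th, coeff_primalSeries_near _ _ _ hl, coeff_primalSeries_near _ _ _ hl,
    coeff_primalSeries_near _ _ _ (by omega), pow_succ', mul_assoc, add_mul, map_add,
    PowerSeries.coeff_succ_X_mul, ← map_natCast (PowerSeries.C (R := ℚ)), PowerSeries.coeff_C_mul]
  ring

theorem th_primalSeries_far (n k : ℕ) :
    th (primalSeries n k 8) =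
      primalSeries n (k + 1) 8 - ((n + 1 : ℕ) : PowerSeries ℚ) * primalSeries n k 8 := by
  ext d
  rw [map_sub, ← map_natCast (PowerSeries.C (R := ℚ)), PowerSeries.coeff_C_mul, coeff_th,
    coeff_primalSeries_far, coeff_primalSeries_far]
  push_cast
  ring

theorem truncMap_primalSeries_nine (n : ℕ) {l : ℕ} (hl : l < 9) :
    truncMap n (primalSeries n 9 l) = truncMap n (((n + 1 : ℕ) : PowerSeries ℚ) *
      primalSeries n 8 l - PowerSeries.X * primalSeries n 0 l) := by
  rw [truncMap_eq_iff]
  intro m hm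
  rw [map_sub, ← map_natCast (PowerSeries.C (R := ℚ)), PowerSeries.coeff_C_mul]
  rcases Nat.lt_succ_iff_lt_or_eq.mp hl with hl | rfl
  · rw [coeff_primalSeries_near _ _ _ hl, coeff_primalSeries_near _ _ _ hl]
    rcases m with _ | m
    · rw [PowerSeries.coeff_zero_X_mul, Nat.cast_zero, add_zero, PowerSeries.coeff_X_pow_mul',
        PowerSeries.coeff_X_pow_mul', if_neg (by omega), if_neg (by omega), mul_zero, sub_zero]
    · rw [PowerSeries.coeff_succ_X_mul, coeff_primalSeries_near _ _ _ hl, pow_zero, one_mul,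
        ← PowerSeries.coeff_C_mul, ← map_sub]
      congr 1
      rw [map_natCast]
      linear_combination natCast_add_X_pow_mul_primalFactor_succ hm
  · rw [coeff_primalSeries_far, coeff_primalSeries_far]
    rcases m with _ | m
    · rw [PowerSeries.coeff_zero_X_mul]
      push_cast
      ring
    · rw [PowerSeries.coeff_succ_X_mul, coeff_primalSeries_far, farPrimalFactor, farPrimalFactor,
        ← add_assoc, Nat.factorial_succ, Nat.factorial_succ]
      have h₁ : (m.factorial : ℚ) ≠ 0 := by positivity
      have h₂ : ((n + 1 + m).factorial : ℚ) ≠ 0 := by positivity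
      have h₃ : (m : ℚ) + 1 ≠ 0 := by positivity
      have h₄ : (n : ℚ) + 1 + m + 1 ≠ 0 := by positivity
      push_cast
      rw [show (n : ℚ) + 1 + (m + 1) = n + 1 + m + 1 by ring]
      field_simp
      ring

/-- The fundamental matrix of the primal series. -/
def primalMatrix (n : ℕ) : Matrix (Fin 9) (Fin 9) (PowerSeries ℚ) :=
  Matrix.of fun k l => primalSeries n k l

theorem coeff_zero_det_primalMatrix (n : ℕ) : PowerSeries.coeff 0 (primalMatrix n).det = -1 := by
  have hnear {k l : ℕ} (hl : l < 8) : PowerSeries.coeff 0 (primalSeries n k l) =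
      if k ≤ l then PowerSeries.coeff (l - k) (primalFactor n 0) else 0 := by
    rw [coeff_primalSeries_near _ _ _ hl, Nat.cast_zero, add_zero, PowerSeries.coeff_X_pow_mul']
  have hdiag : PowerSeries.coeff 0 (primalFactor n 0) = n.factorial := by
    rw [PowerSeries.coeff_zero_eq_constantCoeff_apply, primalFactor, Finset.range_zero,
      Finset.prod_empty, inv_one_series, mul_one, map_prod,
      ← Finset.prod_range_add_one_eq_factorial,
      Nat.cast_prod, Nat.sub_zero]
    exact Finset.prod_congr rfl fun a _ => by simp
  have hentry (k l : Fin 9) : PowerSeries.constantCoeff.mapMatrix (primalMatrix n) k l =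
      PowerSeries.coeff 0 (primalSeries n k l) := by
    rw [PowerSeries.coeff_zero_eq_constantCoeff_apply]
    rfl
  rw [PowerSeries.coeff_zero_eq_constantCoeff_apply, RingHom.map_det,
    Matrix.det_of_isUpperTriangular, Fin.prod_univ_castSucc]
  · have hk (k : Fin 8) : (PowerSeries.constantCoeff.mapMatrix (primalMatrix n))
        (Fin.castSucc k) (Fin.castSucc k) = (n.factorial : ℚ) := by
      rw [hentry, ← hdiag]
      exact (hnear k.2).trans (by rw [Fin.val_castSucc, if_pos le_rfl, Nat.sub_self])
    have hlast : (PowerSeries.constantCoeff.mapMatrix (primalMatrix n)) (Fin.last 8) (Fin.last 8) =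
        -((n.factorial : ℚ) ^ 8)⁻¹ := by
      rw [hentry]
      refine (coeff_primalSeries_far n 8 0).trans ?_
      have h : (n.factorial : ℚ) ≠ 0 := by positivity
      have h' : (n : ℚ) + 1 ≠ 0 := by positivity
      rw [farPrimalFactor, add_zero, Nat.factorial_succ]
      simp
      field_simp
    have h : (n.factorial : ℚ) ^ 8 ≠ 0 := by positivity
    rw [Finset.prod_congr rfl fun k _ => hk k, hlast, Finset.prod_const, Finset.card_univ,
      Fintype.card_fin, mul_neg, mul_inv_cancel₀ h]
  · intro k l hlk
    have hlk' : (l : ℕ) < k := hlk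
    rw [hentry]
    exact (hnear (by omega)).trans (if_neg (by omega))

theorem truncMap_det_primalMatrix (n : ℕ) : truncMap n (primalMatrix n).det = -1 := by
  let C : Matrix (Fin 9) (Fin 9) (TruncRing n) := Matrix.of fun k j =>
    if (k : ℕ) = 8 then
      if j = 8 then ((n + 1 : ℕ) : TruncRing n)
      else if j = 0 then -truncMap n PowerSeries.X else 0
    else if (j : ℕ) = k + 1 then 1 else 0
  let N : Matrix (Fin 9) (Fin 9) (TruncRing n) := Matrix.of fun j l =>
    if (l : ℕ) = 8 then if j = 8 then ((n + 1 : ℕ) : TruncRing n) else 0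
    else if (j : ℕ) + 1 = l then 1 else 0
  have hC (k l : Fin 9) : (C * (primalMatrix n).map (truncMap n)) k l =
      truncMap n (primalSeries n (k + 1) l) := by
    rw [Matrix.mul_apply]
    by_cases hk : (k : ℕ) = 8
    · rw [hk, truncMap_primalSeries_nine n l.2]
      simp [C, hk, Fin.sum_univ_succ, primalMatrix]
      ring
    · rw [Finset.sum_eq_single (⟨k + 1, by omega⟩ : Fin 9)]
      · simp [C, hk, primalMatrix]
      · intro j _ hj
        have hj' : (j : ℕ) ≠ k + 1 := fun h => hj (Fin.ext h)
        simp [C, hk, hj']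
      · simp
  have hN (k l : Fin 9) : ((primalMatrix n).map (truncMap n) * N) k l =
      truncMap n (if (l : ℕ) = 8 then ((n + 1 : ℕ) : PowerSeries ℚ) * primalSeries n k l
        else if (l : ℕ) = 0 then 0 else primalSeries n k (l - 1)) := by
    rw [Matrix.mul_apply]
    rcases eq_or_ne (l : ℕ) 8 with hl | hl
    · obtain rfl : l = 8 := Fin.ext hl
      simp [N, primalMatrix, mul_comm]
    · rw [if_neg hl]
      split_ifs with hl'
      · refine (Finset.sum_eq_zero fun j _ => ?_).trans (map_zero _).symm
        simp [N, hl']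
      · rw [Finset.sum_eq_single (⟨l - 1, by omega⟩ : Fin 9)]
        · simp [N, hl, primalMatrix, Nat.sub_add_cancel (Nat.pos_of_ne_zero hl')]
        · intro j _ hj
          have hj' : (j : ℕ) + 1 ≠ l := fun h => hj (Fin.ext (by simp [← h]))
          simp [N, hl, hj']
        · simp
  have hth : truncMap n (th (primalMatrix n).det) = 0 := by
    refine truncMap_th_det_eq_zero (C := C) (N := N) ?_ ?_
    · ext k l
      rw [Matrix.sub_apply, hC, hN, ← map_sub]
      refine congrArg (truncMap n) ?_
      rcases Nat.lt_succ_iff_lt_or_eq.mp l.2 with hl | hl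
      · rw [if_neg hl.ne]
        rcases hl' : (l : ℕ) with _ | j
        · simp [primalMatrix, hl', th_primalSeries_zero]
        · simp [primalMatrix, hl', th_primalSeries_near n k (hl' ▸ hl)]
      · simp [primalMatrix, hl, th_primalSeries_far]
    · simp [Matrix.trace, C, N, Fin.sum_univ_succ]
  rw [← map_one (truncMap n), ← map_neg, truncMap_eq_iff]
  rw [← map_zero (truncMap n), truncMap_eq_iff] at hth
  intro m hm
  rcases Nat.eq_zero_or_pos m with rfl | hm'
  · rw [coeff_zero_det_primalMatrix]
    simp
  · have h := hth m hm
    rw [coeff_th, map_zero] at h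
    rw [(mul_eq_zero.mp h).resolve_left (by positivity), map_neg, PowerSeries.coeff_one,
      if_neg (by omega), neg_zero]

/-- The generating series of the Taylor coefficients of the dual factors. -/
def dualSeries (n l c : ℕ) : PowerSeries ℚ :=
  PowerSeries.mk fun d =>
    if l < 8 then
      PowerSeries.coeff (7 - l) (localFactor n d * (PowerSeries.X - (d : PowerSeries ℚ)) ^ c)
    else farFactor n (n - d) * ((n : ℚ) + 1 - d) ^ c

theorem sum_coeff_mul_coeff_sub (f g : PowerSeries ℚ) :
    ∑ l : Fin 8, PowerSeries.coeff (l : ℕ) f * PowerSeries.coeff (7 - (l : ℕ)) g =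
      PowerSeries.coeff 7 (f * g) := by
  rw [PowerSeries.coeff_mul, Finset.Nat.sum_antidiagonal_eq_sum_range_succ_mk, Finset.sum_range]

theorem truncMap_sum_primalSeries_mul_dualSeries (n : ℕ) {k c : ℕ} (hkc : k + c ≤ 10) :
    truncMap n (∑ l : Fin 9, primalSeries n k l * dualSeries n l c) =
      truncMap n (PowerSeries.C
        (if 8 ≤ k + c then -((n : ℚ) + 1) ^ (k + c - 8) else 0)) := by
  rw [truncMap_eq_iff]
  intro m hm
  rw [map_sum, Finset.sum_congr rfl fun l _ => PowerSeries.coeff_mul m _ _, Finset.sum_comm,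
    Finset.sum_congr rfl fun x _ => Fin.sum_univ_castSucc _, Finset.sum_add_distrib,
    PowerSeries.coeff_C]
  refine Eq.trans ?_ ((sum_antidiagonal_pairing hm k c hkc).trans ?_)
  · refine congrArg₂ (· + ·) (Finset.sum_congr rfl fun x _ => ?_)
      (Finset.sum_congr rfl fun x _ => ?_)
    · rw [← sum_coeff_mul_coeff_sub]
      refine Finset.sum_congr rfl fun l _ => ?_
      simp [primalSeries, dualSeries]
    · simp [primalSeries, dualSeries]
  · by_cases h : m = 0 <;> simp [h]

/-- The block of the primal matrix which computes the Grassmannian series. -/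
def primalMinor (n : ℕ) : Matrix (Fin 6) (Fin 6) (PowerSeries ℚ) :=
  Matrix.of fun k l => primalSeries n k l

/-- The complementary block of the dual matrix. -/
def dualMinor (n : ℕ) : Matrix (Fin 3) (Fin 3) (PowerSeries ℚ) :=
  Matrix.of fun l c => dualSeries n (6 + l) c

theorem truncMap_det_primalMinor (n : ℕ) :
    truncMap n (primalMinor n).det = -truncMap n (dualMinor n).det := by
  let A : Matrix (Fin 6 ⊕ Fin 3) (Fin 6 ⊕ Fin 3) (TruncRing n) :=
    ((truncMap n).mapMatrix (primalMatrix n)).submatrix finSumFinEquiv finSumFinEquiv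
  let B₁ : Matrix (Fin 6) (Fin 3) (TruncRing n) :=
    Matrix.of fun l c => truncMap n (dualSeries n l c)
  let U : Matrix (Fin 3) (Fin 3) (TruncRing n) := Matrix.of fun k c =>
    truncMap n (PowerSeries.C
      (if 8 ≤ 6 + (k : ℕ) + c then -((n : ℚ) + 1) ^ (6 + (k : ℕ) + c - 8) else 0))
  have hA : A.det = -1 := by
    rw [Matrix.det_submatrix_equiv_self, ← RingHom.map_det, truncMap_det_primalMatrix]
  have hU : U.det = 1 := by
    simp [U, Matrix.det_fin_three]
    ring
  have hprod : A * Matrix.fromBlocks 1 B₁ 0 ((truncMap n).mapMatrix (dualMinor n)) =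
      Matrix.fromBlocks ((truncMap n).mapMatrix (primalMinor n)) 0 A.toBlocks₂₁ U := by
    have hsum (k : ℕ) (hk : k < 9) (c : Fin 3) :
        (∑ l : Fin 6, truncMap n (primalSeries n k l) * B₁ l c) +
          ∑ l : Fin 3, truncMap n (primalSeries n k (6 + l)) *
            truncMap n (dualSeries n (6 + l) c) =
          truncMap n (PowerSeries.C
            (if 8 ≤ k + c then -((n : ℚ) + 1) ^ (k + c - 8) else 0)) := by
      rw [← truncMap_sum_primalSeries_mul_dualSeries n (by omega), map_sum]
      refine Eq.trans ?_ (Fin.sum_univ_add (a := 6) (b := 3) _).symm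
      simp [B₁]
    rw [← Matrix.fromBlocks_toBlocks A, Matrix.fromBlocks_multiply]
    refine Matrix.fromBlocks_inj.mpr ⟨?_, ?_, ?_, ?_⟩
    · rw [Matrix.mul_one, Matrix.mul_zero, add_zero]
      ext k l
      rfl
    · ext k c
      have h := hsum k (by omega) c
      rw [if_neg (by omega), map_zero, map_zero] at h
      exact h
    · rw [Matrix.mul_one, Matrix.mul_zero, add_zero]
      simp
    · ext k c
      exact hsum (6 + k) (by omega) c
  have hdet := congrArg Matrix.det hprod
  rw [Matrix.det_mul, Matrix.det_fromBlocks_zero₂₁, Matrix.det_fromBlocks_zero₁₂, hA, hU,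
    Matrix.det_one, one_mul, mul_one, ← RingHom.map_det, ← RingHom.map_det] at hdet
  linear_combination -hdet

theorem coeff_det_primalMinor (n : ℕ) : PowerSeries.coeff n (primalMinor n).det =
    -PowerSeries.coeff n (dualMinor n).det := by
  have h := truncMap_det_primalMinor n
  rw [← map_neg, truncMap_eq_iff] at h
  rw [h n le_rfl, map_neg]

theorem coeff_mul_mul_of_forall {n : ℕ} {f g h : PowerSeries ℚ} {H : ℕ → ℚ}
    (h₁ : ∀ s ≤ n, PowerSeries.coeff (n - s) h = H s) (h₂ : ∀ s, n < s → H s = 0) :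
    PowerSeries.coeff n (f * g * h) = ∑ i ∈ Finset.range (n + 1), ∑ j ∈ Finset.range (n + 1),
      PowerSeries.coeff i f * PowerSeries.coeff j g * H (i + j) := by
  rw [mul_assoc, PowerSeries.coeff_mul, Finset.Nat.sum_antidiagonal_eq_sum_range_succ_mk]
  refine Finset.sum_congr rfl fun i hi => ?_
  have hi : i ≤ n := Nat.lt_succ_iff.mp (Finset.mem_range.mp hi)
  rw [PowerSeries.coeff_mul, Finset.Nat.sum_antidiagonal_eq_sum_range_succ_mk, Finset.mul_sum,
    ← Finset.sum_subset (Finset.range_subset_range.mpr (show n - i + 1 ≤ n + 1 by omega))]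
  · refine Finset.sum_congr rfl fun j hj => ?_
    have hj : j < n - i + 1 := Finset.mem_range.mp hj
    rw [← h₁ (i + j) (by omega), show n - i - j = n - (i + j) by omega, mul_assoc]
  · intro j _ hj
    rw [h₂ (i + j) (by rw [Finset.mem_range] at hj; omega), mul_zero]

/-- The summand of the determinant of the dual minor. -/
def dualTerm (n i j : ℕ) : ℚ :=
  (Matrix.of ![fun c : Fin 3 => PowerSeries.coeff 1
      (localFactor n i * (PowerSeries.X - (i : PowerSeries ℚ)) ^ (c : ℕ)),
    fun c => PowerSeries.coeff 0
      (localFactor n j * (PowerSeries.X - (j : PowerSeries ℚ)) ^ (c : ℕ)),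
    fun c => farFactor n (i + j) * (((i + j : ℕ) : ℚ) + 1) ^ (c : ℕ)]).det

theorem coeff_det_dualMinor (n : ℕ) : PowerSeries.coeff n (dualMinor n).det =
    ∑ i ∈ Finset.range (n + 1), ∑ j ∈ Finset.range (n + 1), dualTerm n i j := by
  have h (a b c : ℕ) : PowerSeries.coeff n (dualSeries n 6 a * dualSeries n 7 b *
      dualSeries n 8 c) = ∑ i ∈ Finset.range (n + 1), ∑ j ∈ Finset.range (n + 1),
        PowerSeries.coeff 1 (localFactor n i * (PowerSeries.X - (i : PowerSeries ℚ)) ^ a) *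
        PowerSeries.coeff 0 (localFactor n j * (PowerSeries.X - (j : PowerSeries ℚ)) ^ b) *
        (farFactor n (i + j) * (((i + j : ℕ) : ℚ) + 1) ^ c) := by
    rw [coeff_mul_mul_of_forall (H := fun s => farFactor n s * ((s : ℚ) + 1) ^ c)]
    · simp [dualSeries]
    · intro s hs
      rw [dualSeries, PowerSeries.coeff_mk, if_neg (lt_irrefl 8), Nat.sub_sub_self hs,
        Nat.cast_sub hs]
      ring
    · intro s hs
      rw [farFactor_of_lt hs, zero_mul]
  have hdet : (dualMinor n).det =
      dualSeries n 6 0 * dualSeries n 7 1 * dualSeries n 8 2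
      - dualSeries n 6 0 * dualSeries n 7 2 * dualSeries n 8 1
      - dualSeries n 6 1 * dualSeries n 7 0 * dualSeries n 8 2
      + dualSeries n 6 1 * dualSeries n 7 2 * dualSeries n 8 0
      + dualSeries n 6 2 * dualSeries n 7 0 * dualSeries n 8 1
      - dualSeries n 6 2 * dualSeries n 7 1 * dualSeries n 8 0 := by
    rw [Matrix.det_fin_three]
    simp only [dualMinor, Matrix.of_apply]
    norm_num
  rw [hdet]
  simp only [map_add, map_sub, h, ← Finset.sum_add_distrib, ← Finset.sum_sub_distrib]
  refine Finset.sum_congr rfl fun i _ => Finset.sum_congr rfl fun j _ => ?_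
  rw [dualTerm, Matrix.det_fin_three]
  simp

theorem coeff_mul_X_sub_natCast (f : PowerSeries ℚ) (i : ℕ) :
    PowerSeries.coeff 0 (f * (PowerSeries.X - (i : PowerSeries ℚ))) =
        -i * PowerSeries.coeff 0 f ∧
      PowerSeries.coeff 1 (f * (PowerSeries.X - (i : PowerSeries ℚ))) =
        PowerSeries.coeff 0 f - i * PowerSeries.coeff 1 f := by
  rw [mul_sub, map_sub, map_sub, ← map_natCast (PowerSeries.C (R := ℚ)), PowerSeries.coeff_mul_C,
    PowerSeries.coeff_mul_C, PowerSeries.coeff_zero_mul_X,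
    show (1 : ℕ) = 0 + 1 from rfl, PowerSeries.coeff_succ_mul_X]
  constructor <;> ring

theorem snd_dualVand_mul_dualWeight (n i j : ℕ) :
    (dualVand i j * dualWeight n i j).snd = dualTerm n i j + dualTerm n j i := by
  have h₁ (f : PowerSeries ℚ) (i : ℕ) := (coeff_mul_X_sub_natCast f i).1
  have h₂ (f : PowerSeries ℚ) (i : ℕ) := (coeff_mul_X_sub_natCast f i).2
  rw [dualTerm, dualTerm, Matrix.det_fin_three, Matrix.det_fin_three, add_comm j i]
  simp only [dualWeight, dualVand, dualEval, RingHom.coe_mk, MonoidHom.coe_mk, OneHom.coe_mk,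
    dualEps, Matrix.of_apply, Matrix.cons_val, Fin.val_zero, Fin.val_one, Fin.val_two, pow_zero,
    pow_one, pow_two, mul_one, ← mul_assoc, h₁, h₂]
  simp [TrivSqZeroExt.algebraMap_eq_inl]
  ring

theorem two_mul_coeff_det_dualMinor (n : ℕ) :
    2 * PowerSeries.coeff n (dualMinor n).det = dualSum n := by
  rw [dualSum, TrivSqZeroExt.snd_sum, Finset.sum_congr rfl fun i _ => TrivSqZeroExt.snd_sum _ _,
    Finset.sum_congr rfl fun i _ => Finset.sum_congr rfl fun j _ =>
      snd_dualVand_mul_dualWeight n i j]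
  simp only [Finset.sum_add_distrib]
  rw [Finset.sum_comm (f := fun i j => dualTerm n j i), coeff_det_dualMinor, two_mul]

theorem coeff_det_primalMinor_eq_dualSum (n : ℕ) :
    PowerSeries.coeff n (primalMinor n).det = -(dualSum n / 2) := by
  rw [coeff_det_primalMinor, ← two_mul_coeff_det_dualMinor]
  ring

/-! ### Divisibility by the Vandermonde product -/

/-- The `m`-th Newton basis polynomial with nodes `x`. -/
def newtonBasis (x : ℕ → R) (m : ℕ) (z : R) : R := ∏ i ∈ Finset.range m, (z - x i)

theorem newtonBasis_succ (x : ℕ → R) (m : ℕ) (z : R) :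
    newtonBasis x (m + 1) z = newtonBasis x m z * (z - x m) := Finset.prod_range_succ _ _

/-- The combination of the first six Newton basis polynomials with coefficients `D`. -/
def newtonSum (x D : ℕ → R) (z : R) : R := ∑ m ∈ Finset.range 6, newtonBasis x m z * D m

/-- The effect on Newton coefficients of multiplication by the variable. -/
def newtonShift (x D : ℕ → R) : ℕ → R
  | 0 => x 0 * D 0
  | m + 1 => D m + x (m + 1) * D (m + 1)

theorem newtonSum_newtonShift (x D : ℕ → R) {z : R} (hz : newtonBasis x 6 z = 0) :
    newtonSum x (newtonShift x D) z = z * newtonSum x D z := by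
  have h (k : ℕ) : ∑ m ∈ Finset.range (k + 1), newtonBasis x m z * newtonShift x D m +
      newtonBasis x (k + 1) z * D k =
      z * ∑ m ∈ Finset.range (k + 1), newtonBasis x m z * D m := by
    induction k with
    | zero =>
      simp [newtonShift, newtonBasis]
      ring
    | succ k ih =>
      rw [Finset.sum_range_succ, Finset.sum_range_succ _ (k + 1), mul_add, ← ih, newtonShift,
        newtonBasis_succ x (k + 1)]
      ring
  have h5 := h 5
  rwa [hz, zero_mul, add_zero] at h5

theorem newtonSum_add (x D E : ℕ → R) (z : R) :
    newtonSum x (fun m => D m + E m) z = newtonSum x D z + newtonSum x E z := by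
  simp only [newtonSum, mul_add, Finset.sum_add_distrib]

theorem newtonSum_mul (x D : ℕ → R) (r z : R) :
    newtonSum x (fun m => r * D m) z = r * newtonSum x D z := by
  simp only [newtonSum, Finset.mul_sum]
  exact Finset.sum_congr rfl fun m _ => by ring

/-- The variables as Newton nodes. -/
def node (i : ℕ) : R := if h : i < 6 then MvPowerSeries.X ⟨i, h⟩ else 0

theorem constantCoeff_node (i : ℕ) : MvPowerSeries.constantCoeff (node i) = 0 := by
  rw [node]
  split_ifs <;> simp

theorem node_val (j : Fin 6) : node j = MvPowerSeries.X j := by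
  rw [node, dif_pos j.2]

theorem newtonBasis_node_eq_zero {m : ℕ} {j : Fin 6} (h : (j : ℕ) < m) :
    newtonBasis node m (MvPowerSeries.X j) = 0 :=
  Finset.prod_eq_zero (Finset.mem_range.mpr h) (by rw [node_val, sub_self])

/-- The family `g` has a Newton expansion whose coefficients have the constant terms `ψ`. -/
def HasNewtonExpansion (g : Fin 6 → R) (ψ : PowerSeries ℚ) : Prop :=
  ∃ D : ℕ → R, (∀ j, g j = newtonSum node D (MvPowerSeries.X j)) ∧
    ∀ m, MvPowerSeries.constantCoeff (D m) = PowerSeries.coeff m ψ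

theorem hasNewtonExpansion_one : HasNewtonExpansion (fun _ => 1) 1 := by
  refine ⟨fun m => if m = 0 then 1 else 0, fun j => ?_, fun m => ?_⟩
  · simp [newtonSum, newtonBasis]
  · by_cases h : m = 0 <;> simp [h, PowerSeries.coeff_one]

theorem HasNewtonExpansion.add {g h : Fin 6 → R} {ψ φ : PowerSeries ℚ}
    (hg : HasNewtonExpansion g ψ) (hh : HasNewtonExpansion h φ) :
    HasNewtonExpansion (fun j => g j + h j) (ψ + φ) := by
  obtain ⟨D, hD, hD'⟩ := hg
  obtain ⟨E, hE, hE'⟩ := hh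
  refine ⟨fun m => D m + E m, fun j => ?_, fun m => ?_⟩
  · rw [newtonSum_add, ← hD, ← hE]
  · rw [map_add, map_add, hD', hE']

theorem HasNewtonExpansion.const_mul {g : Fin 6 → R} {ψ : PowerSeries ℚ}
    (hg : HasNewtonExpansion g ψ) (r : R) :
    HasNewtonExpansion (fun j => r * g j)
      (PowerSeries.C (MvPowerSeries.constantCoeff r) * ψ) := by
  obtain ⟨D, hD, hD'⟩ := hg
  refine ⟨fun m => r * D m, fun j => ?_, fun m => ?_⟩
  · rw [newtonSum_mul, ← hD]
  · rw [map_mul, PowerSeries.coeff_C_mul, hD']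

theorem HasNewtonExpansion.X_mul {g : Fin 6 → R} {ψ : PowerSeries ℚ}
    (hg : HasNewtonExpansion g ψ) :
    HasNewtonExpansion (fun j => MvPowerSeries.X j * g j) (PowerSeries.X * ψ) := by
  obtain ⟨D, hD, hD'⟩ := hg
  refine ⟨newtonShift node D, fun j => ?_, fun m => ?_⟩
  · rw [newtonSum_newtonShift _ _ (newtonBasis_node_eq_zero j.2), ← hD]
  · rcases m with _ | m
    · rw [newtonShift, map_mul, constantCoeff_node, zero_mul, PowerSeries.coeff_zero_X_mul]
    · rw [newtonShift, map_add, map_mul, constantCoeff_node, zero_mul, add_zero,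
        PowerSeries.coeff_succ_X_mul, hD']

theorem HasNewtonExpansion.X_add_mul {g : Fin 6 → R} {ψ : PowerSeries ℚ}
    (hg : HasNewtonExpansion g ψ) (a : ℕ) :
    HasNewtonExpansion (fun j => (MvPowerSeries.X j + (a : R)) * g j)
      ((PowerSeries.X + (a : PowerSeries ℚ)) * ψ) := by
  have h := hg.X_mul.add (hg.const_mul (a : R))
  rw [map_natCast, map_natCast, ← add_mul] at h
  simpa only [add_mul] using h

theorem HasNewtonExpansion.sub_X_mul {g : Fin 6 → R} {ψ : PowerSeries ℚ}
    (hg : HasNewtonExpansion g ψ) {s : R} (hs : MvPowerSeries.constantCoeff s = 0) (a : ℕ) :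
    HasNewtonExpansion (fun j => (s + (a : R) - MvPowerSeries.X j) * g j)
      (((a : PowerSeries ℚ) - PowerSeries.X) * ψ) := by
  have h := (hg.const_mul (s + a)).add (hg.X_mul.const_mul (-1))
  rw [map_add, hs, zero_add, map_natCast, map_natCast, map_neg, map_one, map_neg, map_one,
    neg_one_mul, ← sub_eq_add_neg, ← sub_mul] at h
  convert h using 2
  ring

theorem HasNewtonExpansion.of_X_add_mul {g : Fin 6 → R} {ψ : PowerSeries ℚ} {a : ℕ}
    (hg : HasNewtonExpansion (fun j => (MvPowerSeries.X j + ((a + 1 : ℕ) : R)) * g j)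
      ((PowerSeries.X + ((a + 1 : ℕ) : PowerSeries ℚ)) * ψ)) :
    HasNewtonExpansion g ψ := by
  obtain ⟨D, hD, hD'⟩ := hg
  have hne (x : R) (hx : MvPowerSeries.constantCoeff x = 0) :
      MvPowerSeries.constantCoeff (x + ((a + 1 : ℕ) : R)) ≠ 0 := by
    rw [map_add, hx, zero_add, map_natCast]
    exact Nat.cast_ne_zero.mpr a.succ_ne_zero
  let E : ℕ → R := fun m => Nat.rec ((node 0 + ((a + 1 : ℕ) : R))⁻¹ * D 0)
    (fun m e => (node (m + 1) + ((a + 1 : ℕ) : R))⁻¹ * (D (m + 1) - e)) m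
  have hE0 : (node 0 + ((a + 1 : ℕ) : R)) * E 0 = D 0 := by
    have h : E 0 = (node 0 + ((a + 1 : ℕ) : R))⁻¹ * D 0 := rfl
    rw [h, ← mul_assoc, MvPowerSeries.mul_inv_cancel _ (hne _ (constantCoeff_node _)), one_mul]
  have hEsucc (m : ℕ) : E m + (node (m + 1) + ((a + 1 : ℕ) : R)) * E (m + 1) = D (m + 1) := by
    have h : E (m + 1) = (node (m + 1) + ((a + 1 : ℕ) : R))⁻¹ * (D (m + 1) - E m) := rfl
    rw [h, ← mul_assoc, MvPowerSeries.mul_inv_cancel _ (hne _ (constantCoeff_node _)), one_mul]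
    ring
  refine ⟨E, fun j => ?_, fun m => ?_⟩
  · have hED : D = fun m => newtonShift node E m + ((a + 1 : ℕ) : R) * E m := by
      funext m
      rcases m with _ | m
      · rw [newtonShift, ← hE0]
        ring
      · rw [newtonShift, ← hEsucc]
        ring
    have hj := hD j
    rw [hED, newtonSum_add, newtonSum_mul,
      newtonSum_newtonShift _ _ (newtonBasis_node_eq_zero j.2), ← add_mul] at hj
    refine mul_left_cancel₀ (fun h0 => ?_) hj
    exact hne _ (MvPowerSeries.constantCoeff_X j) (by rw [h0, map_zero])
  · have ha : ((a + 1 : ℕ) : ℚ) ≠ 0 := Nat.cast_ne_zero.mpr a.succ_ne_zero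
    refine mul_left_cancel₀ ha ?_
    induction m with
    | zero =>
      have h := congrArg MvPowerSeries.constantCoeff hE0
      rw [map_mul, map_add, constantCoeff_node, zero_add, map_natCast, hD', add_mul, map_add,
        PowerSeries.coeff_zero_X_mul, zero_add, ← map_natCast (PowerSeries.C (R := ℚ)),
        PowerSeries.coeff_C_mul] at h
      exact h
    | succ m ih =>
      have h := congrArg MvPowerSeries.constantCoeff (hEsucc m)
      rw [map_add, map_mul, map_add, constantCoeff_node, zero_add, map_natCast, hD', add_mul,
        map_add, PowerSeries.coeff_succ_X_mul, ← map_natCast (PowerSeries.C (R := ℚ)),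
        PowerSeries.coeff_C_mul, mul_left_cancel₀ ha ih] at h
      exact add_left_cancel h

/-- The sum of the variables. -/
def varSum : R := ∑ j, MvPowerSeries.X j

theorem constantCoeff_varSum : MvPowerSeries.constantCoeff varSum = 0 := by
  simp [varSum]

/-- The factor of the variable `x_j` in a term of degree `n`. -/
def varFactor (n d : ℕ) (j : Fin 6) : R :=
  (∏ a ∈ Finset.range (n - d), (varSum + ((a + 1 : ℕ) : R) - MvPowerSeries.X j)) *
    (∏ a ∈ Finset.range d, (MvPowerSeries.X j + ((a + 1 : ℕ) : R)) ^ 8)⁻¹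

theorem hasNewtonExpansion_inv (d : ℕ) :
    HasNewtonExpansion
      (fun j => (∏ a ∈ Finset.range d, (MvPowerSeries.X j + ((a + 1 : ℕ) : R)) ^ 8)⁻¹)
      (∏ a ∈ Finset.range d, (((a + 1 : ℕ) : PowerSeries ℚ) + PowerSeries.X) ^ 8)⁻¹ := by
  induction d with
  | zero =>
    have h : ((1 : R))⁻¹ = 1 := by
      rw [MvPowerSeries.inv_eq_iff_mul_eq_one] <;> simp
    simpa only [Finset.range_zero, Finset.prod_empty, h, inv_one_series] using
      hasNewtonExpansion_one
  | succ d ih =>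
    have hpow (k : ℕ) {g : Fin 6 → R} {ψ : PowerSeries ℚ}
        (h : HasNewtonExpansion (fun j => (MvPowerSeries.X j + ((d + 1 : ℕ) : R)) ^ k * g j)
          ((PowerSeries.X + ((d + 1 : ℕ) : PowerSeries ℚ)) ^ k * ψ)) :
        HasNewtonExpansion g ψ := by
      induction k with
      | zero => simpa only [pow_zero, one_mul] using h
      | succ k ihk =>
        refine ihk (HasNewtonExpansion.of_X_add_mul (a := d) ?_)
        simpa only [pow_succ', mul_assoc] using h
    refine hpow 8 ?_
    convert ih using 1
    · funext j
      rw [Finset.prod_range_succ, MvPowerSeries.mul_inv_rev, ← mul_assoc,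
        MvPowerSeries.mul_inv_cancel, one_mul]
      rw [map_pow, map_add, MvPowerSeries.constantCoeff_X, zero_add, map_natCast]
      positivity
    · rw [Finset.prod_range_succ, add_comm PowerSeries.X]
      refine inv_mul_mul_cancel ?_
      rw [map_pow]
      exact pow_ne_zero _ (constantCoeff_natCast_add_X d)

theorem hasNewtonExpansion_varFactor (n d k : ℕ) :
    HasNewtonExpansion (fun j => (MvPowerSeries.X j + (d : R)) ^ k * varFactor n d j)
      ((PowerSeries.X + (d : PowerSeries ℚ)) ^ k * primalFactor n d) := by
  induction k with
  | zero =>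
    simp only [pow_zero, one_mul, varFactor, primalFactor]
    generalize n - d = m
    induction m with
    | zero => simpa only [Finset.range_zero, Finset.prod_empty, one_mul] using
        hasNewtonExpansion_inv d
    | succ m ih =>
      have h := ih.sub_X_mul constantCoeff_varSum (m + 1)
      simp only [Finset.prod_range_succ]
      convert h using 1
      · funext j
        ring
      · ring
  | succ k ih => simpa only [pow_succ', mul_assoc] using ih.X_add_mul d

theorem coeff_prod_fin_six (f : Fin 6 → PowerSeries R) (N : ℕ) :
    PowerSeries.coeff N (∏ j, f j) =
      ∑ d ∈ (Fintype.piFinset fun _ : Fin 6 => Finset.range (N + 1)).filter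
        (fun d => ∑ j, d j = N), ∏ j, PowerSeries.coeff (d j) (f j) := by
  rw [PowerSeries.coeff_prod]
  refine Finset.sum_bij' (fun l _ => ⇑l) (fun d _ => Finsupp.equivFunOnFinite.symm d)
    (fun l hl => ?_) (fun d hd => ?_) (fun l _ => ?_) (fun d _ => ?_) (fun l _ => rfl)
  · have hl := (Finset.mem_finsuppAntidiag.mp hl).1
    refine Finset.mem_filter.mpr ⟨Fintype.mem_piFinset.mpr fun j => ?_, hl⟩
    rw [Finset.mem_range, Nat.lt_succ_iff, ← hl]
    exact Finset.single_le_sum (f := l) (fun _ _ => Nat.zero_le _) (Finset.mem_univ j)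
  · exact Finset.mem_finsuppAntidiag.mpr ⟨(Finset.mem_filter.mp hd).2, Finset.subset_univ _⟩
  · exact Finsupp.equivFunOnFinite.symm_apply_apply l
  · exact Finsupp.equivFunOnFinite.apply_symm_apply d

theorem coeff_det_fin_six (M : Matrix (Fin 6) (Fin 6) (PowerSeries R)) (N : ℕ) :
    PowerSeries.coeff N M.det =
      ∑ d ∈ (Fintype.piFinset fun _ : Fin 6 => Finset.range (N + 1)).filter
        (fun d => ∑ j, d j = N),
        (Matrix.of fun j k => PowerSeries.coeff (d j) (M j k)).det := by
  have h (d : Fin 6 → ℕ) : (Matrix.of fun j k => PowerSeries.coeff (d j) (M j k)).det =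
      ∑ σ : Equiv.Perm (Fin 6), Equiv.Perm.sign σ •
        ∏ j, PowerSeries.coeff (d j) (M j (σ j)) := by
    rw [← Matrix.det_transpose, Matrix.det_apply]
    rfl
  simp only [h]
  rw [← Matrix.det_transpose, Matrix.det_apply, map_sum, Finset.sum_comm]
  refine Finset.sum_congr rfl fun σ _ => ?_
  simp only [Units.smul_def, map_zsmul, Matrix.transpose_apply, coeff_prod_fin_six,
    Finset.smul_sum]

theorem prod_pairs_sub (z : Fin 6 → R) :
    ∏ p ∈ pairs, (z p.1 - z p.2) = -(Matrix.vandermonde z).det := by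
  have h : ∏ p ∈ pairs, (z p.2 - z p.1) = (Matrix.vandermonde z).det := by
    rw [Matrix.det_vandermonde, Finset.prod_sigma', pairs]
    refine Finset.prod_bij' (fun p _ => ⟨p.1, p.2⟩) (fun p _ => (p.1, p.2)) ?_ ?_ ?_ ?_ ?_ <;>
      simp
  have hcard : pairs.card = 15 := by decide
  rw [← h, Finset.prod_congr rfl fun p _ => (neg_sub (z p.2) (z p.1)).symm, Finset.prod_neg, hcard]
  ring

theorem prod_Icc_one_eq_prod_range (f : ℕ → R) (m : ℕ) :
    ∏ a ∈ Finset.Icc 1 m, f a = ∏ a ∈ Finset.range m, f (a + 1) := by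
  induction m with
  | zero => simp
  | succ m ih => rw [Finset.prod_Icc_succ_top (by omega), Finset.prod_range_succ, ih]

theorem Cc_natCast (a : ℕ) : Cc (a : ℚ) = (a : R) := map_natCast MvPowerSeries.C a

theorem ws_eq : ws = (List.ofFn fun i : Fin 6 => fun j : Fin 6 => if j = i then 0 else 1) ++
    List.replicate 3 fun _ => 1 := by
  decide

theorem inv_prod_eq_prod_inv (s : Finset (Fin 6)) (u : Fin 6 → R) :
    (∏ j ∈ s, u j)⁻¹ = ∏ j ∈ s, (u j)⁻¹ := by
  induction s using Finset.induction_on with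
  | empty =>
    rw [Finset.prod_empty, Finset.prod_empty, MvPowerSeries.inv_eq_iff_mul_eq_one] <;> simp
  | insert a s ha ih =>
    rw [Finset.prod_insert ha, Finset.prod_insert ha, MvPowerSeries.mul_inv_rev, ih, mul_comm]

/-- The factor contributed by the three determinant line bundles. -/
def lineFactor (N : ℕ) : R := (∏ a ∈ Finset.range N, (varSum + ((a + 1 : ℕ) : R))) ^ 3

theorem T_eq {d : Fin 6 → ℕ} {N : ℕ} (hd : ∑ j, d j = N) :
    T d = -(lineFactor N * ((∏ j, varFactor N (d j) j) *
      (Matrix.vandermonde fun j => MvPowerSeries.X j + ((d j : ℕ) : R)).det)) := by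
  have hV : ∏ p ∈ pairs,
      ((MvPowerSeries.X p.1 : R) - MvPowerSeries.X p.2 + Cc ((d p.1 : ℚ) - (d p.2 : ℚ))) =
      -(Matrix.vandermonde fun j => MvPowerSeries.X j + ((d j : ℕ) : R)).det := by
    rw [← prod_pairs_sub]
    refine Finset.prod_congr rfl fun p _ => ?_
    have h : Cc ((d p.1 : ℚ) - (d p.2 : ℚ)) = ((d p.1 : ℕ) : R) - ((d p.2 : ℕ) : R) := by
      rw [← Cc_natCast, ← Cc_natCast]
      exact map_sub _ _ _
    rw [h]
    ring
  have hone : ∏ m ∈ Finset.Icc 1 (∑ j, 1 * d j),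
      ((∑ j : Fin 6, Cc ((1 : ℕ) : ℚ) * MvPowerSeries.X j) + Cc (m : ℚ)) =
      ∏ a ∈ Finset.range N, (varSum + ((a + 1 : ℕ) : R)) := by
    simp only [one_mul, hd, Cc_natCast, prod_Icc_one_eq_prod_range, varSum]
    simp only [Nat.cast_one, one_mul]
  have hdrop (i : Fin 6) : ∏ m ∈ Finset.Icc 1 (∑ j, (if j = i then 0 else 1) * d j),
      ((∑ j : Fin 6, Cc (((if j = i then 0 else 1 : ℕ)) : ℚ) * MvPowerSeries.X j) +
        Cc (m : ℚ)) =
      ∏ a ∈ Finset.range (N - d i), (varSum + ((a + 1 : ℕ) : R) - MvPowerSeries.X i) := by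
    have h₁ : ∑ j, (if j = i then 0 else 1) * d j = N - d i := by
      have h : ∑ j, (if j = i then 0 else 1) * d j + d i = N := by
        rw [← hd, ← Finset.sum_erase_add _ _ (Finset.mem_univ i),
          ← Finset.sum_erase_add _ d (Finset.mem_univ i), if_pos rfl, zero_mul, add_zero]
        refine congrArg (· + d i) (Finset.sum_congr rfl fun j hj => ?_)
        rw [if_neg (Finset.ne_of_mem_erase hj), one_mul]
      omega
    have h₂ : ∑ j : Fin 6, Cc (((if j = i then 0 else 1 : ℕ)) : ℚ) * MvPowerSeries.X j =
        varSum - MvPowerSeries.X i := by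
      rw [eq_sub_iff_add_eq, varSum, ← Finset.sum_erase_add _ _ (Finset.mem_univ i),
        ← Finset.sum_erase_add _ (fun j => (MvPowerSeries.X j : R)) (Finset.mem_univ i),
        if_pos rfl, Cc_natCast, Nat.cast_zero, zero_mul, add_zero]
      refine congrArg (· + (MvPowerSeries.X i : R)) (Finset.sum_congr rfl fun j hj => ?_)
      rw [if_neg (Finset.ne_of_mem_erase hj), Cc_natCast, Nat.cast_one, one_mul]
    rw [h₁, h₂, prod_Icc_one_eq_prod_range]
    refine Finset.prod_congr rfl fun a _ => ?_
    rw [Cc_natCast]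
    ring
  have hinv : (∏ j, ∏ m ∈ Finset.Icc 1 (d j), ((MvPowerSeries.X j : R) + Cc (m : ℚ)) ^ n)⁻¹ =
      ∏ j, (∏ a ∈ Finset.range (d j), ((MvPowerSeries.X j : R) + ((a + 1 : ℕ) : R)) ^ 8)⁻¹ := by
    rw [inv_prod_eq_prod_inv]
    refine Finset.prod_congr rfl fun j _ => ?_
    rw [prod_Icc_one_eq_prod_range]
    simp only [Cc_natCast, n]
  rw [T, hV, hinv, ws_eq, List.map_append, List.prod_append, List.map_replicate,
    List.prod_replicate, hone, List.map_ofFn, List.prod_ofFn]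
  simp only [Function.comp_apply, hdrop, varFactor, Finset.prod_mul_distrib, lineFactor]
  ring

theorem det_newtonBasis_node :
    (Matrix.of fun j m : Fin 6 => newtonBasis node m (MvPowerSeries.X j)).det =
      (Matrix.vandermonde fun j => (MvPowerSeries.X j : R)).det := by
  have hdiag (j : Fin 6) : newtonBasis node j (MvPowerSeries.X j) =
      ∏ i ∈ Finset.Iio j, (MvPowerSeries.X j - MvPowerSeries.X i) := by
    simp only [newtonBasis, ← node_val]
    rw [← Nat.Iio_eq_range, ← Fin.map_valEmbedding_Iio, Finset.prod_map]
    rfl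
  rw [Matrix.det_of_isLowerTriangular, Matrix.det_vandermonde]
  rotate_left
  · exact fun j m h => newtonBasis_node_eq_zero h
  simp only [Matrix.of_apply, hdiag]
  exact Finset.prod_comm' fun j i => by simp

theorem exists_F_eq (N : ℕ) : ∃ G : R, F N = Vand * G ∧
    MvPowerSeries.constantCoeff G =
      (N.factorial : ℚ) ^ 3 * PowerSeries.coeff N (primalMinor N).det := by
  choose D hD hD' using fun d k => hasNewtonExpansion_varFactor N d k
  let M : Matrix (Fin 6) (Fin 6) (PowerSeries R) := Matrix.of fun j k =>
    PowerSeries.mk fun d => (MvPowerSeries.X j + (d : R)) ^ (k : ℕ) * varFactor N d j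
  let L : Matrix (Fin 6) (Fin 6) R := Matrix.of fun j m =>
    newtonBasis node m (MvPowerSeries.X j)
  let E : Matrix (Fin 6) (Fin 6) (PowerSeries R) := Matrix.of fun m k =>
    PowerSeries.mk fun d => D d k m
  have hM : M = PowerSeries.C.mapMatrix L * E := by
    refine Matrix.ext fun j k => PowerSeries.ext fun d => ?_
    rw [Matrix.mul_apply, map_sum]
    simp only [M, L, E, Matrix.of_apply, PowerSeries.coeff_mk, RingHom.mapMatrix_apply,
      Matrix.map_apply, PowerSeries.coeff_C_mul]
    exact (hD d k j).trans (Finset.sum_range _)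
  have hL : Vand = -L.det := by
    rw [det_newtonBasis_node, ← prod_pairs_sub, Vand]
  have hF : F N = -(lineFactor N * PowerSeries.coeff N M.det) := by
    rw [F, coeff_det_fin_six, Finset.mul_sum, ← Finset.sum_neg_distrib]
    refine Finset.sum_congr rfl fun d hd => ?_
    rw [T_eq (Finset.mem_filter.mp hd).2, ← Matrix.det_mul_column]
    congr 4
    ext j k
    simp only [M, Matrix.of_apply, PowerSeries.coeff_mk, Matrix.vandermonde_apply, mul_comm]
  refine ⟨lineFactor N * PowerSeries.coeff N E.det, ?_, ?_⟩
  · rw [hF, hL, hM, Matrix.det_mul, ← RingHom.map_det, PowerSeries.coeff_C_mul]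
    ring
  · have hline : MvPowerSeries.constantCoeff (lineFactor N) = (N.factorial : ℚ) ^ 3 := by
      rw [lineFactor, map_pow, map_prod, ← Finset.prod_range_add_one_eq_factorial, Nat.cast_prod]
      refine congrArg (· ^ 3) (Finset.prod_congr rfl fun a _ => ?_)
      rw [map_add, constantCoeff_varSum, zero_add, map_natCast]
    have hE : (PowerSeries.map MvPowerSeries.constantCoeff).mapMatrix E =
        (primalMinor N).transpose := by
      ext m k d
      simp only [RingHom.mapMatrix_apply, Matrix.map_apply, PowerSeries.coeff_map, E,
        Matrix.of_apply, PowerSeries.coeff_mk, hD', Matrix.transpose_apply, primalMinor]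
      rw [coeff_primalSeries_near _ _ _ (by omega)]
    rw [map_mul, hline, ← PowerSeries.coeff_map, RingHom.map_det, hE, Matrix.det_transpose]

theorem Vand_ne_zero : Vand ≠ 0 := by
  refine Finset.prod_ne_zero_iff.mpr fun p hp => sub_ne_zero.mpr fun h => ?_
  exact (Finset.mem_filter.mp hp).2.ne (MvPowerSeries.X_inj.mp h)

theorem constantCoeff_quotient {N : ℕ} {G : R} (hG : F N = Vand * G) :
    (-1 : ℚ) ^ N * MvPowerSeries.constantCoeff G = solutionCoeff N := by
  obtain ⟨G', hG', hG''⟩ := exists_F_eq N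
  rw [mul_left_cancel₀ Vand_ne_zero (hG.symm.trans hG'), hG'', coeff_det_primalMinor_eq_dualSum,
    solutionCoeff]
  ring

/-- every `F_δ` is divisible by the Vandermonde `Δ`, and the series
`I₀ = Σ a_δ q^δ` with `a_δ = (−1)^δ·(F_δ/Δ)(0)` is annihilated by the stated
Picard–Fuchs operator. -/
theorem stmt_9 :
    (∀ δ : ℕ, ∃ G : R, F δ = Vand * G) ∧
    (∀ G : ℕ → R, (∀ δ : ℕ, F δ = Vand * G δ) →
      ∀ I₀ : PowerSeries ℚ,
        I₀ = PowerSeries.mk (fun δ => (-1 : ℚ) ^ δ * MvPowerSeries.constantCoeff (G δ)) →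
        361 * th^[4] I₀ - 19 * PowerSeries.X * (700 * th^[4] I₀ + 1238 * th^[3] I₀ + 999 * th^[2] I₀ + 380 * th I₀ + 57 * I₀) + PowerSeries.X ^ 2 * (-64745 * th^[4] I₀ - 368006 * th^[3] I₀ - 609133 * th^[2] I₀ - 412756 * th I₀ - 102258 * I₀) + 27 * PowerSeries.X ^ 3 * (6397 * th^[4] I₀ + 12198 * th^[3] I₀ - 11923 * th^[2] I₀ - 27360 * th I₀ - 11286 * I₀) + 729 * PowerSeries.X ^ 4 * (64 * th^[4] I₀ + 1154 * th^[3] I₀ + 2425 * th^[2] I₀ + 1848 * th I₀ + 486 * I₀) - 177147 * PowerSeries.X ^ 5 * ((fun g => th g + g) ((fun g => th g + g) ((fun g => th g + g) ((fun g => th g + g) (I₀))))) = 0) := by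
  refine ⟨fun δ => (exists_F_eq δ).imp fun _ h => h.1, fun G hG I₀ hI => ?_⟩
  refine picardFuchs_solutionCoeff (hI.trans ?_)
  exact congrArg PowerSeries.mk (funext fun δ => constantCoeff_quotient (hG δ))

end Stmt9
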